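/- arXiv:1011.3561 — 5 statements merged into one kernel-verified Lean document; each statement's English description precedes it below -/
import Mathlib

section
/- Let n ≥ 2 and let S ⊆ so(n,ℂ) be Ad-invariant, i.e. gXg⁻¹ ∈ S for every X ∈ S and every g ∈ SO(n,ℂ). Let h ∈ ℝ. Then for every T > 0 and every differentiable curve R : [0,T] → {selfadjoint endomorphisms of so(n)} satisfying the ODE R'(t) = R(t)∘R(t) + R(t)^# for all t ∈ [0,T], if R(0) ∈ C(S,h) then R(t) ∈ C(S,h) for all t ∈ [0,T]. -/
/-!
The heart of the matter is pointwise. Suppose `R(·, conj ·)` restricted to the `SO(n,ℂ)`-orbit of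
`w` attains its minimum at `w`. The second variations along `exp(sx)` and `exp(s·ix)` add up to
`4·R([x,w], conj [x,w])`, so this number is nonnegative for all `x` (`hessian_nonneg`), i.e. `R` is
nonnegative on the range of `ad_w`, and by conjugation on the range of its adjoint `-ad_(w̄)`.
A linear algebra argument (`trace_nonneg`) then yields
`R^#(w, w̄) = -(1/2)·tr(ad_w R ad_(w̄) R) ≥ 0` (`sharp_nonneg_of_min`). Since also
`R²(w, w̄) = |Rw|² ≥ 0`, the vector field of the ODE does not point out of `C(S,h)`.

As `S` is an arbitrary invariant set, the infimum of `R(v, v̄)` over `S` need not be attained.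
Instead, a compactness argument on the unit sphere shows that a vector `v ∈ S` with
`R(v, v̄) ≤ h + η|v|²` satisfies `R^#(v, v̄) ≥ -ε|v|²` once `η` is small (`sharp_approx`): the
inequality `R(gvg⁻¹, conj) ≥ R(v, v̄) - η|v|²` is homogeneous in `v` and survives limits.

This is combined with the barrier `R(t) + ε·exp((K+1)t)·id`, where `K` controls the difference of
`(R + a)^#` and `R^#` (`sharp_perturb`). If the barrier lies in `C(S,h)` at time `t`, it does so for
a short time afterwards, uniformly in `v ∈ S` (`barrier_step`), and the set of good times is closed;
hence it stays in `C(S,h)` on `[0,T]`, and `ε → 0` gives the claim.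
-/


open Matrix

noncomputable section

/-- The real Lie algebra `so(n)` of skew-symmetric real `n × n` matrices, as a submodule of
the space of all real `n × n` matrices. -/
def soM (n : ℕ) : Submodule ℝ (Matrix (Fin n) (Fin n) ℝ) where
  carrier := {A | Aᵀ = -A}
  add_mem' := by
    intro a b ha hb
    simp only [Set.mem_setOf_eq] at *
    rw [Matrix.transpose_add, ha, hb, neg_add]
  zero_mem' := by simp
  smul_mem' := by
    intro c a ha
    simp only [Set.mem_setOf_eq] at *
    rw [Matrix.transpose_smul, ha, smul_neg]

variable {n : ℕ}

/-- The invariant inner product `⟨A,B⟩ = -(1/2)·tr(AB)` on `so(n)`. -/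
def soInner (A B : soM n) : ℝ :=
  -(1/2) * ((A : Matrix (Fin n) (Fin n) ℝ) * (B : Matrix (Fin n) (Fin n) ℝ)).trace

/-- Selfadjointness with respect to `soInner`. -/
def IsSA (R : soM n →ₗ[ℝ] soM n) : Prop :=
  ∀ A B : soM n, soInner (R A) B = soInner A (R B)

/-- The skew-symmetric part of a real matrix, as an element of `so(n)`;
on skew-symmetric matrices this is the identity. -/
def skewPart (A : Matrix (Fin n) (Fin n) ℝ) : soM n :=
  ⟨(1/2 : ℝ) • (A - Aᵀ), by
    show ((1/2 : ℝ) • (A - Aᵀ))ᵀ = -((1/2 : ℝ) • (A - Aᵀ))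
    rw [Matrix.transpose_smul, Matrix.transpose_sub, Matrix.transpose_transpose, ← smul_neg,
      neg_sub]⟩

/-- The real part of an element of `so(n,ℂ)`, as an element of `so(n)`. -/
def reSk (v : Matrix (Fin n) (Fin n) ℂ) : soM n := skewPart (v.map Complex.re)

/-- The imaginary part of an element of `so(n,ℂ)`, as an element of `so(n)`. -/
def imSk (v : Matrix (Fin n) (Fin n) ℂ) : soM n := skewPart (v.map Complex.im)

/-- Entrywise complex conjugation `X ↦ X̄` on `so(n,ℂ)`. -/
def conjM (v : Matrix (Fin n) (Fin n) ℂ) : Matrix (Fin n) (Fin n) ℂ := v.map (starRingEnd ℂ)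

/-- The unique `ℂ`-bilinear extension to `so(n,ℂ)` of a real bilinear form `B` on `so(n)`,
computed through real and imaginary parts. -/
def bilinC (B : soM n → soM n → ℝ) (v w : Matrix (Fin n) (Fin n) ℂ) : ℂ :=
  ((B (reSk v) (reSk w) - B (imSk v) (imSk w) : ℝ) : ℂ) +
    ((B (reSk v) (imSk w) + B (imSk v) (reSk w) : ℝ) : ℂ) * Complex.I

/-- The value `R(v,w)` of the `ℂ`-bilinear extension of `(A,B) ↦ ⟨R A, B⟩` to `so(n,ℂ)`. -/
def qC (R : soM n →ₗ[ℝ] soM n) (v w : Matrix (Fin n) (Fin n) ℂ) : ℂ :=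
  bilinC (fun a b => soInner (R a) b) v w

open ComplexOrder in
/-- The set `C(S,h)` of selfadjoint endomorphisms `R` of `so(n)` with `R(v,v̄) ≥ h`
for all `v ∈ S`. -/
def CSet (S : Set (Matrix (Fin n) (Fin n) ℂ)) (h : ℝ) : Set (soM n →ₗ[ℝ] soM n) :=
  {R | IsSA R ∧ ∀ v ∈ S, (h : ℂ) ≤ qC R v (conjM v)}

/-- `ad_x : so(n) → so(n)`, `z ↦ xz - zx`. -/
def adM (x : soM n) : soM n →ₗ[ℝ] soM n where
  toFun z := ⟨(x : Matrix (Fin n) (Fin n) ℝ) * (z : Matrix (Fin n) (Fin n) ℝ)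
      - (z : Matrix (Fin n) (Fin n) ℝ) * (x : Matrix (Fin n) (Fin n) ℝ), by
    have hx : (x : Matrix (Fin n) (Fin n) ℝ)ᵀ = -(x : Matrix (Fin n) (Fin n) ℝ) := x.2
    have hz : (z : Matrix (Fin n) (Fin n) ℝ)ᵀ = -(z : Matrix (Fin n) (Fin n) ℝ) := z.2
    show ((x : Matrix (Fin n) (Fin n) ℝ) * (z : Matrix (Fin n) (Fin n) ℝ)
      - (z : Matrix (Fin n) (Fin n) ℝ) * (x : Matrix (Fin n) (Fin n) ℝ))ᵀ = _
    rw [Matrix.transpose_sub, Matrix.transpose_mul, Matrix.transpose_mul, hx, hz]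
    simp only [Matrix.neg_mul, Matrix.mul_neg, neg_neg, neg_sub]⟩
  map_add' a b := by
    apply Subtype.ext
    simp only [Submodule.coe_add, Matrix.mul_add, Matrix.add_mul]
    abel
  map_smul' c a := by
    apply Subtype.ext
    simp only [SetLike.val_smul, RingHom.id_apply, Matrix.mul_smul, Matrix.smul_mul, smul_sub]

/-- The bilinear form of `R^#`:
`⟨R^# x, y⟩ = -(1/2)·tr(ad_x ∘ R ∘ ad_y ∘ R)`, the trace being that of an
endomorphism of the vector space `so(n)`. -/
def sharpForm (R : soM n →ₗ[ℝ] soM n) (x y : soM n) : ℝ :=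
  -(1/2) * LinearMap.trace ℝ (soM n) (adM x ∘ₗ R ∘ₗ adM y ∘ₗ R)

/-! ### Bilinear and Hermitian forms on `so(n)` -/

lemma soInner_comm (A B : soM n) : soInner A B = soInner B A := by
  unfold soInner
  rw [Matrix.trace_mul_comm]

/-- `soInner` as a bilinear map. -/
def ipB : soM n →ₗ[ℝ] soM n →ₗ[ℝ] ℝ :=
  LinearMap.mk₂ ℝ soInner
    (by intro a b c; simp [soInner, Matrix.add_mul]; ring)
    (by intro c a b; simp [soInner]; ring)
    (by intro a b c; simp [soInner, Matrix.mul_add]; ring)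
    (by intro c a b; simp [soInner]; ring)

@[simp] lemma ipB_apply (A B : soM n) : ipB A B = soInner A B := rfl

/-- `adM` as a linear map `so(n) → End(so(n))`. -/
def adL : soM n →ₗ[ℝ] (soM n →ₗ[ℝ] soM n) where
  toFun := adM
  map_add' a b := by
    ext z : 2
    simp only [adM, LinearMap.coe_mk, AddHom.coe_mk, LinearMap.add_apply, Submodule.coe_add,
      Matrix.add_mul, Matrix.mul_add]
    abel
  map_smul' c a := by
    ext z : 2
    simp only [adM, LinearMap.coe_mk, AddHom.coe_mk, LinearMap.smul_apply, SetLike.val_smul,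
      RingHom.id_apply, Matrix.mul_smul, Matrix.smul_mul, smul_sub]

@[simp] lemma adL_apply (x : soM n) : adL x = adM x := rfl

/-- The polarisation `-(1/2)·tr(ad_x ∘ P ∘ ad_y ∘ Q)` of `sharpForm`. -/
def crB (P Q : soM n →ₗ[ℝ] soM n) : soM n →ₗ[ℝ] soM n →ₗ[ℝ] ℝ :=
  LinearMap.mk₂ ℝ
    (fun x y => -(1/2) * LinearMap.trace ℝ (soM n) (adL x ∘ₗ P ∘ₗ adL y ∘ₗ Q))
    (by intro a b c; simp only [map_add, LinearMap.add_comp, LinearMap.comp_add]; ring)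
    (by intro c a b; simp only [map_smul, LinearMap.smul_comp, LinearMap.comp_smul, smul_eq_mul]; ring)
    (by intro a b c; simp only [map_add, LinearMap.add_comp, LinearMap.comp_add]; ring)
    (by intro c a b; simp only [map_smul, LinearMap.smul_comp, LinearMap.comp_smul, smul_eq_mul]; ring)

lemma crB_apply (P Q : soM n →ₗ[ℝ] soM n) (x y : soM n) :
    crB P Q x y = -(1/2) * LinearMap.trace ℝ (soM n) (adM x ∘ₗ P ∘ₗ adM y ∘ₗ Q) := rfl

lemma crB_self (P : soM n →ₗ[ℝ] soM n) (x y : soM n) : crB P P x y = sharpForm P x y := rfl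

lemma crB_add_smul (P : soM n →ₗ[ℝ] soM n) (a : ℝ) :
    crB (P + a • LinearMap.id) (P + a • LinearMap.id)
      = crB P P + a • (crB P LinearMap.id + crB LinearMap.id P)
        + (a * a) • crB LinearMap.id LinearMap.id := by
  ext x y : 2
  simp only [crB_apply, LinearMap.add_apply, LinearMap.smul_apply, LinearMap.add_comp,
    LinearMap.comp_add, LinearMap.smul_comp, LinearMap.comp_smul, map_add, map_smul, smul_eq_mul]
  ring

/-- The Hermitian quadratic form `v ↦ B(v, v̄)` of a real bilinear form `B`, in terms of the real
and imaginary parts of `v`. For non-symmetric `B` this is the form of the symmetric part.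
The norm square on `so(n,ℂ)` is `hermQ ipB`. -/
def hermQ (B : soM n →ₗ[ℝ] soM n →ₗ[ℝ] ℝ) (v : Matrix (Fin n) (Fin n) ℂ) : ℝ :=
  B (reSk v) (reSk v) + B (imSk v) (imSk v)

lemma hermQ_add (B C : soM n →ₗ[ℝ] soM n →ₗ[ℝ] ℝ) (v) :
    hermQ (B + C) v = hermQ B v + hermQ C v := by
  simp [hermQ]; ring

lemma hermQ_smul (c : ℝ) (B : soM n →ₗ[ℝ] soM n →ₗ[ℝ] ℝ) (v) :
    hermQ (c • B) v = c * hermQ B v := by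
  simp [hermQ]; ring

lemma reSk_conjM (v : Matrix (Fin n) (Fin n) ℂ) : reSk (conjM v) = reSk v := by
  ext i j; simp [reSk, skewPart, conjM]

lemma imSk_conjM (v : Matrix (Fin n) (Fin n) ℂ) : imSk (conjM v) = - imSk v := by
  ext i j; simp [imSk, skewPart, conjM]; ring

/-- For selfadjoint `R`, the number `R(v, v̄)` is real, so membership in `C(S,h)` is a family of
real inequalities. -/
lemma qC_conj (R : soM n →ₗ[ℝ] soM n) (hR : IsSA R) (v : Matrix (Fin n) (Fin n) ℂ) :
    qC R v (conjM v) = ((hermQ (ipB ∘ₗ R) v : ℝ) : ℂ) := by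
  have e : ∀ a b, soInner a (-b) = - soInner (n := n) a b := fun a b => (ipB a).map_neg b
  have hs : soInner (R (imSk v)) (reSk v) = soInner (R (reSk v)) (imSk v) := by
    rw [hR, soInner_comm]
  simp only [qC, bilinC, reSk_conjM, imSk_conjM, e, hermQ, LinearMap.comp_apply, ipB_apply, hs]
  simp

lemma mem_CSet_iff (S : Set (Matrix (Fin n) (Fin n) ℂ)) (h : ℝ) (R : soM n →ₗ[ℝ] soM n)
    (hR : IsSA R) : R ∈ CSet S h ↔ ∀ v ∈ S, h ≤ hermQ (ipB ∘ₗ R) v := by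
  simp only [CSet, Set.mem_ofPred_eq, hR, true_and]
  refine forall₂_congr fun v _ => ?_
  rw [qC_conj R hR, Complex.real_le_real]

lemma soInner_self (A : soM n) : soInner A A = 1/2 * ∑ i, ∑ j, (A.1 i j)^2 := by
  have hA : ∀ i j, A.1 j i = - A.1 i j := fun i j => congrFun (congrFun A.2 i) j
  simp only [soInner, Matrix.trace, Matrix.diag, Matrix.mul_apply]
  rw [neg_mul, ← mul_neg, ← Finset.sum_neg_distrib]
  congr 1
  refine Finset.sum_congr rfl fun i _ => ?_
  rw [← Finset.sum_neg_distrib]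
  refine Finset.sum_congr rfl fun j _ => ?_
  rw [hA i j]; ring

lemma soInner_self_nonneg (A : soM n) : 0 ≤ soInner A A := by
  rw [soInner_self]; positivity

lemma soInner_self_eq_zero (A : soM n) (h : soInner A A = 0) : A = 0 := by
  rw [soInner_self] at h
  have h' : ∑ i, ∑ j, (A.1 i j)^2 = 0 := by linarith
  ext i j
  have h1 := (Finset.sum_eq_zero_iff_of_nonneg (fun i _ => by positivity)).1 h' i (Finset.mem_univ _)
  have h2 := (Finset.sum_eq_zero_iff_of_nonneg (fun i _ => by positivity)).1 h1 j (Finset.mem_univ _)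
  simpa using h2

/-- `so(n)` has a basis that is orthonormal for `soInner`. The inner product space structure is
introduced only inside the proof, because its topology is not the subspace topology definitionally. -/
lemma exists_orthonormal_basis (n : ℕ) : ∃ (d : ℕ) (b : Module.Basis (Fin d) ℝ (soM n)),
    ∀ i j, soInner (b i) (b j) = if i = j then 1 else 0 := by
  let c : InnerProductSpace.Core ℝ (soM n) :=
    { inner := soInner
      conj_inner_symm := fun x y => by simp [soInner_comm x y]
      re_inner_nonneg := fun x => soInner_self_nonneg x
      add_left := fun x y z => by
        show ipB (x + y) z = ipB x z + ipB y z
        simp only [map_add, LinearMap.add_apply]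
      smul_left := fun x y r => by
        show ipB (r • x) y = r * ipB x y
        simp only [map_smul, LinearMap.smul_apply, smul_eq_mul]
      definite := fun x hx => soInner_self_eq_zero x hx }
  let _ : NormedAddCommGroup (soM n) := c.toNormedAddCommGroup
  let _ : InnerProductSpace ℝ (soM n) := InnerProductSpace.ofCore c.toCore
  refine ⟨_, (stdOrthonormalBasis ℝ (soM n)).toBasis, fun i j => ?_⟩
  have := orthonormal_iff_ite.1 (stdOrthonormalBasis ℝ (soM n)).orthonormal i j
  rw [OrthonormalBasis.coe_toBasis]
  exact this

lemma repr_eq {d : ℕ} (b : Module.Basis (Fin d) ℝ (soM n))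
    (hb : ∀ i j, soInner (b i) (b j) = if i = j then 1 else 0) (x : soM n) (i : Fin d) :
    b.repr x i = soInner (b i) x := by
  conv_rhs => rw [← b.sum_repr x]
  rw [← ipB_apply, map_sum]
  simp [hb]

lemma bilin_expand {d : ℕ} (b : Module.Basis (Fin d) ℝ (soM n))
    (B : soM n →ₗ[ℝ] soM n →ₗ[ℝ] ℝ) (x y : soM n) :
    B x y = ∑ i, ∑ j, B (b i) (b j) * (b.repr x i * b.repr y j) := by
  conv_lhs => rw [← b.sum_repr x, ← b.sum_repr y]
  simp only [map_sum, map_smul, LinearMap.sum_apply, LinearMap.smul_apply, smul_eq_mul]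
  simp only [Finset.mul_sum]
  rw [Finset.sum_comm]
  refine Finset.sum_congr rfl fun i _ => Finset.sum_congr rfl fun j _ => ?_
  ring

lemma hermQ_ip_eq {d : ℕ} (b : Module.Basis (Fin d) ℝ (soM n))
    (hb : ∀ i j, soInner (b i) (b j) = if i = j then 1 else 0) (v : Matrix (Fin n) (Fin n) ℂ) :
    hermQ ipB v = ∑ i, ((b.repr (reSk v) i)^2 + (b.repr (imSk v) i)^2) := by
  rw [hermQ, bilin_expand b, bilin_expand b, Finset.sum_add_distrib]
  simp [hb, pow_two]

/-- Every Hermitian form is bounded by the sum of the absolute values of its coefficients in an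
orthonormal basis times the norm square `hermQ ipB`. -/
lemma abs_hermQ_le {d : ℕ} (b : Module.Basis (Fin d) ℝ (soM n))
    (hb : ∀ i j, soInner (b i) (b j) = if i = j then 1 else 0)
    (B : soM n →ₗ[ℝ] soM n →ₗ[ℝ] ℝ) (v : Matrix (Fin n) (Fin n) ℂ) :
    |hermQ B v| ≤ (∑ i, ∑ j, |B (b i) (b j)|) * hermQ ipB v := by
  have hle : ∀ i, (b.repr (reSk v) i)^2 + (b.repr (imSk v) i)^2 ≤ hermQ ipB v := by
    intro i
    rw [hermQ_ip_eq b hb]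
    exact Finset.single_le_sum
      (f := fun i => (b.repr (reSk v) i)^2 + (b.repr (imSk v) i)^2)
      (fun i _ => by positivity) (Finset.mem_univ i)
  have e : hermQ B v = ∑ i, ∑ j, B (b i) (b j) *
      (b.repr (reSk v) i * b.repr (reSk v) j + b.repr (imSk v) i * b.repr (imSk v) j) := by
    rw [hermQ, bilin_expand b B (reSk v), bilin_expand b B (imSk v)]
    simp only [← Finset.sum_add_distrib, mul_add]
  rw [e, Finset.sum_mul]
  refine (Finset.abs_sum_le_sum_abs _ _).trans (Finset.sum_le_sum fun i _ => ?_)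
  rw [Finset.sum_mul]
  refine (Finset.abs_sum_le_sum_abs _ _).trans (Finset.sum_le_sum fun j _ => ?_)
  rw [abs_mul]
  refine mul_le_mul_of_nonneg_left ?_ (abs_nonneg _)
  have h1 := hle i
  have h2 := hle j
  set p := b.repr (reSk v) i
  set q := b.repr (reSk v) j
  set r := b.repr (imSk v) i
  set s := b.repr (imSk v) j
  rw [abs_le]
  constructor <;> nlinarith [sq_nonneg (p - q), sq_nonneg (p + q), sq_nonneg (r - s), sq_nonneg (r + s)]

lemma hermQ_ip_nonneg (v : Matrix (Fin n) (Fin n) ℂ) : 0 ≤ hermQ ipB v :=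
  add_nonneg (soInner_self_nonneg _) (soInner_self_nonneg _)

lemma soInner_adM (x z w : soM n) : soInner (adM x z) w = - soInner z (adM x w) := by
  simp only [soInner, adM, LinearMap.coe_mk, AddHom.coe_mk, Matrix.sub_mul, Matrix.mul_sub,
    Matrix.trace_sub]
  rw [← Matrix.mul_assoc, ← Matrix.mul_assoc, Matrix.trace_mul_comm (z.1 * w.1) x.1,
    ← Matrix.mul_assoc]
  ring

lemma trace_eq_sum {d : ℕ} (b : Module.Basis (Fin d) ℝ (soM n))
    (hb : ∀ i j, soInner (b i) (b j) = if i = j then 1 else 0) (f : soM n →ₗ[ℝ] soM n) :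
    LinearMap.trace ℝ (soM n) f = ∑ k, soInner (b k) (f (b k)) := by
  rw [LinearMap.trace_eq_matrix_trace ℝ b]
  simp only [Matrix.trace, Matrix.diag, LinearMap.toMatrix_apply]
  exact Finset.sum_congr rfl fun k _ => repr_eq b hb _ _

/-! ### A trace inequality -/

/-- If `R` is symmetric and is nonnegative on the ranges of `N` and of `Nᵀ`, then
`tr(NᵀRN·R) ≥ 0`: the eigenvectors of `NᵀRN` with nonzero eigenvalue lie in the range of `Nᵀ`. -/
lemma trace_nonneg {ι : Type*} [Fintype ι] [DecidableEq ι] (N R : Matrix ι ι ℝ) (hR : Rᵀ = R)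
    (h1 : ∀ x, 0 ≤ (N *ᵥ x) ⬝ᵥ (R *ᵥ (N *ᵥ x)))
    (h2 : ∀ x, 0 ≤ (Nᵀ *ᵥ x) ⬝ᵥ (R *ᵥ (Nᵀ *ᵥ x))) :
    0 ≤ (Nᵀ * R * N * R).trace := by
  set M := Nᵀ * R * N with hM
  have hMh : M.IsHermitian := by
    simp [Matrix.IsHermitian, hM, Matrix.transpose_mul, hR, Matrix.mul_assoc]
  have hMpsd : M.PosSemidef := by
    refine Matrix.PosSemidef.of_dotProduct_mulVec_nonneg hMh fun x => ?_
    have := h1 x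
    rw [star_trivial, hM, ← Matrix.mulVec_mulVec, ← Matrix.mulVec_mulVec,
      Matrix.dotProduct_mulVec, Matrix.vecMul_transpose]
    exact this
  have hsp := hMh.spectral_theorem
  set U : Matrix ι ι ℝ := (hMh.eigenvectorUnitary : Matrix ι ι ℝ) with hU
  have hsp' : M = U * Matrix.diagonal hMh.eigenvalues * Uᵀ := hsp
  have htr : (M * R).trace = ∑ k, hMh.eigenvalues k * (Uᵀ * R * U) k k := by
    conv_lhs => rw [hsp']
    rw [Matrix.mul_assoc, Matrix.mul_assoc, Matrix.trace_mul_comm, Matrix.mul_assoc]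
    simp [Matrix.trace, Matrix.diagonal_mul, Matrix.mul_assoc]
  rw [htr]
  refine Finset.sum_nonneg fun k _ => ?_
  set u : ι → ℝ := (hMh.eigenvectorBasis k).ofLp with hu
  have hk : (Uᵀ * R * U) k k = u ⬝ᵥ (R *ᵥ u) := by
    rw [Matrix.mul_assoc]
    rfl
  have he : M *ᵥ u = hMh.eigenvalues k • u := hMh.mulVec_eigenvectorBasis k
  have hl := hMpsd.eigenvalues_nonneg k
  rw [hk]
  set l := hMh.eigenvalues k
  rcases hl.eq_or_lt with h0 | h0
  · rw [← h0]; simp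
  have h3 := h2 (R *ᵥ (N *ᵥ u))
  have h4 : Nᵀ *ᵥ (R *ᵥ (N *ᵥ u)) = l • u := by
    rw [← he, hM]; simp [Matrix.mulVec_mulVec, Matrix.mul_assoc]
  rw [h4, Matrix.mulVec_smul, smul_dotProduct, dotProduct_smul, smul_eq_mul, smul_eq_mul] at h3
  exact nonneg_of_mul_nonneg_right h3 h0

/-- If the Hessian form `x ↦ R(ad_w x, conj (ad_w x))`, `w = a + ib`, is nonnegative, then so is
`R^#(w, w̄)`. -/
lemma sharp_nonneg (R : soM n →ₗ[ℝ] soM n) (hR : IsSA R) (x0 y0 : soM n)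
    (hH : ∀ X Y : soM n,
      0 ≤ soInner (R (adM x0 X - adM y0 Y)) (adM x0 X - adM y0 Y)
        + soInner (R (adM x0 Y + adM y0 X)) (adM x0 Y + adM y0 X)) :
    0 ≤ sharpForm R x0 x0 + sharpForm R y0 y0 := by
  obtain ⟨d, b, hb⟩ := exists_orthonormal_basis n
  set m := LinearMap.toMatrix b b with hm
  set A := m (adM x0) with hA
  set B := m (adM y0) with hB
  set Q := m R with hQ
  have hsk : ∀ x, (m (adM x))ᵀ = - m (adM x) := by
    intro x; ext i j
    simp only [hm, Matrix.transpose_apply, Matrix.neg_apply, LinearMap.toMatrix_apply,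
      repr_eq b hb]
    rw [soInner_comm, soInner_adM]
  have hAt : Aᵀ = -A := hsk _
  have hBt : Bᵀ = -B := hsk _
  have hQt : Qᵀ = Q := by
    ext i j
    simp only [hQ, hm, Matrix.transpose_apply, LinearMap.toMatrix_apply, repr_eq b hb]
    rw [← hR, soInner_comm]
  -- this block matrix is the real form of `ad_w = ad_a + i ad_b`, acting on `so(n) ⊕ i so(n)`
  have key := trace_nonneg (Matrix.fromBlocks A (-B) B A) (Matrix.fromBlocks Q 0 0 Q)
    (by simp [Matrix.fromBlocks_transpose, hQt])
  have hdot : ∀ p q : Fin d → ℝ, p ⬝ᵥ q = soInner (∑ i, p i • b i) (∑ i, q i • b i) := by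
    intro p q
    rw [← ipB_apply, bilin_expand b]
    simp only [b.repr_sum_self]
    simp [hb, dotProduct]
  have hmul : ∀ (f : soM n →ₗ[ℝ] soM n) (p : Fin d → ℝ),
      ∑ i, (m f *ᵥ p) i • b i = f (∑ i, p i • b i) := by
    intro f p
    apply b.repr.injective
    ext k
    have := congrFun (LinearMap.toMatrix_mulVec_repr b b f (∑ i, p i • b i)) k
    rw [b.repr_sum_self] at this
    rw [b.repr_sum_self, ← this]
  have hsum : ∀ p q : Fin d → ℝ, ∑ i, (p + q) i • b i = ∑ i, p i • b i + ∑ i, q i • b i := by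
    intro p q; simp [add_smul, Finset.sum_add_distrib]
  have hneg : ∀ p : Fin d → ℝ, ∑ i, (-p) i • b i = - ∑ i, p i • b i := by
    intro p
    rw [← Finset.sum_neg_distrib]
    exact Finset.sum_congr rfl fun i _ => neg_smul (p i) (b i)
  -- the quadratic form of `Q ⊕ Q` in coordinates
  have hquad : ∀ p q : Fin d → ℝ,
      Sum.elim p q ⬝ᵥ (Matrix.fromBlocks Q 0 0 Q *ᵥ Sum.elim p q)
        = soInner (R (∑ i, p i • b i)) (∑ i, p i • b i)
          + soInner (R (∑ i, q i • b i)) (∑ i, q i • b i) := by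
    intro p q
    rw [Matrix.fromBlocks_mulVec]
    simp only [Function.comp_def, Sum.elim_inl, Sum.elim_inr, Matrix.zero_mulVec, add_zero,
      zero_add, sumElim_dotProduct_sumElim]
    rw [hdot, hdot, hmul, hmul, hR, hR]
  have htr : ∀ E F G H : Matrix (Fin d) (Fin d) ℝ,
      (Matrix.fromBlocks E F G H).trace = E.trace + H.trace := by
    intro E F G H; simp [Matrix.trace]
  have key2 := key ?_ ?_
  · rw [Matrix.fromBlocks_transpose, Matrix.fromBlocks_multiply, Matrix.fromBlocks_multiply,
      Matrix.fromBlocks_multiply, htr] at key2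
    simp only [sharpForm, LinearMap.trace_eq_matrix_trace ℝ b, LinearMap.toMatrix_comp b b b]
    simp only [← hm, ← hA, ← hB, ← hQ]
    simp only [hAt, hBt, Matrix.transpose_neg, neg_neg, Matrix.mul_zero, Matrix.zero_mul, add_zero,
      zero_add, Matrix.neg_mul, Matrix.mul_neg, Matrix.add_mul, Matrix.trace_add,
      Matrix.trace_neg, Matrix.mul_assoc] at key2 ⊢
    linarith
  · intro x
    obtain ⟨p, q, rfl⟩ : ∃ p q : Fin d → ℝ, x = Sum.elim p q :=
      ⟨x ∘ Sum.inl, x ∘ Sum.inr, (Sum.elim_comp_inl_inr x).symm⟩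
    rw [Matrix.fromBlocks_mulVec, hquad]
    simp only [Function.comp_def, Sum.elim_inl, Sum.elim_inr, Matrix.neg_mulVec, hsum, hneg]
    have := hH (∑ i, p i • b i) (∑ i, q i • b i)
    simp only [hA, hB, hmul]
    convert this using 3 <;> abel_nf
  · intro x
    obtain ⟨p, q, rfl⟩ : ∃ p q : Fin d → ℝ, x = Sum.elim p q :=
      ⟨x ∘ Sum.inl, x ∘ Sum.inr, (Sum.elim_comp_inl_inr x).symm⟩
    rw [Matrix.fromBlocks_transpose, Matrix.fromBlocks_mulVec, hquad]
    simp only [Function.comp_def, Sum.elim_inl, Sum.elim_inr, Matrix.transpose_neg, hAt, hBt,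
      Matrix.neg_mulVec, neg_neg, hsum, hneg]
    have := hH (-∑ i, p i • b i) (∑ i, q i • b i)
    simp only [hA, hB, hmul]
    have e1 : -adM x0 (∑ i, p i • b i) + -adM y0 (∑ i, q i • b i)
      = adM x0 (-∑ i, p i • b i) - adM y0 (∑ i, q i • b i) := by rw [map_neg]; abel
    have e2 : adM y0 (∑ i, p i • b i) + -adM x0 (∑ i, q i • b i)
      = -(adM x0 (∑ i, q i • b i) + adM y0 (-∑ i, p i • b i)) := by rw [map_neg]; abel
    have e3 : ∀ z, soInner (R (-z)) (-z) = soInner (R z) z := fun z => by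
      rw [map_neg, ← ipB_apply, map_neg, map_neg, LinearMap.neg_apply, neg_neg, ipB_apply]
    rw [e1, e2, e3]
    exact this

/-! ### The second variation along `Ad`-orbits -/

/-- The second derivative test at a global minimum, for a quadratic form along a curve. -/
lemma second_variation {V : Type*} [NormedAddCommGroup V] [NormedSpace ℝ V]
    [FiniteDimensional ℝ V] (B : V →ₗ[ℝ] V →ₗ[ℝ] ℝ) (F F1 F2 : ℝ → V)
    (h1 : ∀ s, HasDerivAt F (F1 s) s) (h2 : ∀ s, HasDerivAt F1 (F2 s) s)
    (hmin : ∀ s, B (F 0) (F 0) ≤ B (F s) (F s)) :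
    0 ≤ B (F2 0) (F 0) + 2 * B (F1 0) (F1 0) + B (F 0) (F2 0) := by
  let Bc : V →L[ℝ] V →L[ℝ] ℝ := LinearMap.toContinuousLinearMap
    ((LinearMap.toContinuousLinearMap : (V →ₗ[ℝ] ℝ) ≃ₗ[ℝ] (V →L[ℝ] ℝ)).toLinearMap ∘ₗ B)
  have hBc : ∀ u w, Bc u w = B u w := fun u w => rfl
  have hd : ∀ (G H G' H' : ℝ → V), (∀ s, HasDerivAt G (G' s) s) → (∀ s, HasDerivAt H (H' s) s) →
      ∀ s, HasDerivAt (fun s => B (G s) (H s)) (B (G s) (H' s) + B (G' s) (H s)) s := by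
    intro G H G' H' hG hH s
    exact Bc.hasDerivAt_of_bilinear (fun _ => hG s) (fun _ => hH s)
  have d1 := hd F F F1 F1 h1 h1
  have d2 : ∀ s, HasDerivAt (fun s => B (F s) (F1 s) + B (F1 s) (F s))
      ((B (F s) (F2 s) + B (F1 s) (F1 s)) + (B (F1 s) (F1 s) + B (F2 s) (F s))) s := fun s =>
    (hd F F1 F1 F2 h1 h2 s).add (hd F1 F F2 F1 h2 h1 s)
  by_contra hneg
  have e1 : deriv (fun s => B (F s) (F s)) = fun s => B (F s) (F1 s) + B (F1 s) (F s) :=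
    funext fun s => (d1 s).deriv
  have hlmin : IsLocalMin (fun s => B (F s) (F s)) 0 := Filter.Eventually.of_forall hmin
  have hlmax : IsLocalMax (fun s => B (F s) (F s)) 0 := by
    refine isLocalMax_of_deriv_deriv_neg ?_ hlmin.deriv_eq_zero (d1 0).continuousAt
    rw [e1, (d2 0).deriv]
    linarith
  -- a point that is both a minimum and a maximum makes the function locally constant
  have hconst : (fun s => B (F s) (F s)) =ᶠ[nhds 0] fun _ => B (F 0) (F 0) := by
    filter_upwards [hlmax] with s hs
    exact le_antisymm hs (hmin s)
  have hz := hconst.deriv.deriv_eq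
  rw [e1, (d2 0).deriv] at hz
  simp at hz
  linarith

/-- `reSk` as a real-linear map. -/
def reL : Matrix (Fin n) (Fin n) ℂ →ₗ[ℝ] soM n where
  toFun := reSk
  map_add' a b := by ext i j; simp [reSk, skewPart]; ring
  map_smul' c a := by ext i j; simp [reSk, skewPart]; ring

/-- `imSk` as a real-linear map. -/
def imL : Matrix (Fin n) (Fin n) ℂ →ₗ[ℝ] soM n where
  toFun := imSk
  map_add' a b := by ext i j; simp [imSk, skewPart]; ring
  map_smul' c a := by ext i j; simp [imSk, skewPart]; ring

/-- The real bilinear form `(u, v) ↦ B(Re u, Re v) + B(Im u, Im v)` polarising `hermQ`. -/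
def hermB (B : soM n →ₗ[ℝ] soM n →ₗ[ℝ] ℝ) :
    Matrix (Fin n) (Fin n) ℂ →ₗ[ℝ] Matrix (Fin n) (Fin n) ℂ →ₗ[ℝ] ℝ :=
  B.compl₁₂ reL reL + B.compl₁₂ imL imL

lemma hermB_apply (B : soM n →ₗ[ℝ] soM n →ₗ[ℝ] ℝ) (u v : Matrix (Fin n) (Fin n) ℂ) :
    hermB B u v = B (reSk u) (reSk v) + B (imSk u) (imSk v) := rfl

lemma hermB_self (B : soM n →ₗ[ℝ] soM n →ₗ[ℝ] ℝ) (v : Matrix (Fin n) (Fin n) ℂ) :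
    hermB B v v = hermQ B v := rfl

lemma hermB_I (B : soM n →ₗ[ℝ] soM n →ₗ[ℝ] ℝ) (u v : Matrix (Fin n) (Fin n) ℂ) :
    hermB B (Complex.I • u) (Complex.I • v) = hermB B u v := by
  have h1 : ∀ u : Matrix (Fin n) (Fin n) ℂ, reSk (Complex.I • u) = - imSk u := by
    intro u; ext i j; simp [reSk, imSk, skewPart]; ring
  have h2 : ∀ u : Matrix (Fin n) (Fin n) ℂ, imSk (Complex.I • u) = reSk u := by
    intro u; ext i j; simp [reSk, imSk, skewPart]
  simp [hermB_apply, h1, h2, add_comm]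

/-- Exponentials of complex skew-symmetric matrices lie in `SO(n,ℂ)`. -/
lemma exp_mem (x : Matrix (Fin n) (Fin n) ℂ) (hx : xᵀ = -x) :
    (NormedSpace.exp x)ᵀ * NormedSpace.exp x = 1 ∧ (NormedSpace.exp x).det = 1 := by
  have key : ∀ x : Matrix (Fin n) (Fin n) ℂ, xᵀ = -x →
      (NormedSpace.exp x)ᵀ * NormedSpace.exp x = 1 := by
    intro x hx
    rw [← Matrix.exp_transpose, hx, ← Matrix.exp_add_of_commute _ _ (Commute.refl x).neg_left]
    simp
  refine ⟨key x hx, ?_⟩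
  -- `exp x` is the square of the orthogonal matrix `exp (x/2)`
  have hh : ((1/2 : ℂ) • x)ᵀ = -((1/2 : ℂ) • x) := by rw [Matrix.transpose_smul, hx, smul_neg]
  have h1 := key _ hh
  have h2 : NormedSpace.exp x = NormedSpace.exp ((1/2 : ℂ) • x) * NormedSpace.exp ((1/2 : ℂ) • x) := by
    rw [← Matrix.exp_add_of_commute _ _ (Commute.refl _), ← add_smul]
    norm_num
  have h3 := congrArg Matrix.det h1
  rw [Matrix.det_mul, Matrix.det_transpose, Matrix.det_one] at h3
  rw [h2, Matrix.det_mul, h3]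

open scoped Matrix.Norms.Operator in
lemma hasDerivAt_conj_exp (x u : Matrix (Fin n) (Fin n) ℂ) (s : ℝ) :
    HasDerivAt (fun s : ℝ => NormedSpace.exp (s • x) * u * NormedSpace.exp (s • (-x)))
      (NormedSpace.exp (s • x) * (x * u - u * x) * NormedSpace.exp (s • (-x))) s := by
  have h1 := hasDerivAt_exp_smul_const (𝕂 := ℝ) x s
  have h2 := hasDerivAt_exp_smul_const' (𝕂 := ℝ) (-x) s
  refine ((h1.mul_const u).mul h2).congr_deriv ?_
  simp only [Matrix.mul_sub, Matrix.sub_mul, Matrix.mul_assoc, Matrix.neg_mul, Matrix.mul_neg]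
  abel

open scoped Matrix.Norms.Operator in
/-- If `R(·, conj ·)` restricted to the `SO(n,ℂ)`-orbit of `w` is minimal at `w`, then
`R(ad_x w, conj (ad_x w)) ≥ 0`: the second variations in the directions `x` and `ix` add up to
a positive multiple of it. -/
lemma hessian_nonneg (B : soM n →ₗ[ℝ] soM n →ₗ[ℝ] ℝ) (w : Matrix (Fin n) (Fin n) ℂ)
    (hmin : ∀ g : Matrix (Fin n) (Fin n) ℂ, gᵀ * g = 1 → g.det = 1 →
      hermQ B w ≤ hermQ B (g * w * g⁻¹))
    (x : Matrix (Fin n) (Fin n) ℂ) (hx : xᵀ = -x) : 0 ≤ hermQ B (x * w - w * x) := by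
  have key : ∀ x : Matrix (Fin n) (Fin n) ℂ, xᵀ = -x →
      0 ≤ hermB B (x * (x * w - w * x) - (x * w - w * x) * x) w
        + 2 * hermB B (x * w - w * x) (x * w - w * x)
        + hermB B w (x * (x * w - w * x) - (x * w - w * x) * x) := by
    intro x hx
    have := second_variation (hermB B) _ _ _ (hasDerivAt_conj_exp x w)
      (hasDerivAt_conj_exp x (x * w - w * x)) (by
        intro s
        have hsx : (s • x)ᵀ = -(s • x) := by rw [Matrix.transpose_smul, hx, smul_neg]
        obtain ⟨e1, e2⟩ := exp_mem (s • x) hsx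
        have := hmin _ e1 e2
        rw [← Matrix.exp_neg] at this
        simpa [hermB_self] using this)
    simpa using this
  have k1 := key x hx
  have k2 := key (Complex.I • x) (by rw [Matrix.transpose_smul, hx, smul_neg])
  have e1 : (Complex.I • x) * w - w * (Complex.I • x) = Complex.I • (x * w - w * x) := by
    simp [smul_sub]
  have e2 : (Complex.I • x) * (Complex.I • (x * w - w * x))
      - (Complex.I • (x * w - w * x)) * (Complex.I • x)
      = -(x * (x * w - w * x) - (x * w - w * x) * x) := by
    simp only [Matrix.smul_mul, Matrix.mul_smul, smul_smul, Complex.I_mul_I, neg_smul, one_smul]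
    abel
  rw [e1, e2, hermB_I, map_neg, map_neg, LinearMap.neg_apply] at k2
  rw [← hermB_self]
  linarith

/-- At a minimum of `R(·, conj ·)` along an `SO(n,ℂ)`-orbit one has `R^#(w, w̄) ≥ 0`. -/
lemma sharp_nonneg_of_min (R : soM n →ₗ[ℝ] soM n) (hR : IsSA R) (w : Matrix (Fin n) (Fin n) ℂ)
    (hw : wᵀ = -w)
    (hmin : ∀ g : Matrix (Fin n) (Fin n) ℂ, gᵀ * g = 1 → g.det = 1 →
      hermQ (ipB ∘ₗ R) w ≤ hermQ (ipB ∘ₗ R) (g * w * g⁻¹)) :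
    0 ≤ hermQ (crB R R) w := by
  refine sharp_nonneg R hR (reSk w) (imSk w) fun X Y => ?_
  let x : Matrix (Fin n) (Fin n) ℂ := X.1.map Complex.ofReal + Complex.I • Y.1.map Complex.ofReal
  have hXt : ∀ i j, X.1 j i = - X.1 i j := fun i j => congrFun (congrFun X.2 i) j
  have hYt : ∀ i j, Y.1 j i = - Y.1 i j := fun i j => congrFun (congrFun Y.2 i) j
  have hwt : ∀ i j, w j i = - w i j := fun i j => congrFun (congrFun hw i) j
  have hx : xᵀ = -x := by
    ext i j
    simp [x, hXt i j, hYt i j]; ring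
  have := hessian_nonneg (ipB ∘ₗ R) w hmin x hx
  have ew : w = (reSk w).1.map Complex.ofReal + Complex.I • (imSk w).1.map Complex.ofReal := by
    ext i j
    apply Complex.ext
    · simp [reSk, imSk, skewPart, hwt i j]; ring
    · simp [reSk, imSk, skewPart, hwt i j]; ring
  -- real and imaginary parts of a skew matrix given by its two real components
  have parts : ∀ P Q : soM n,
      reSk (P.1.map Complex.ofReal + Complex.I • Q.1.map Complex.ofReal) = P ∧
      imSk (P.1.map Complex.ofReal + Complex.I • Q.1.map Complex.ofReal) = Q := by
    intro P Q
    have hP : ∀ i j, P.1 j i = - P.1 i j := fun i j => congrFun (congrFun P.2 i) j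
    have hQ : ∀ i j, Q.1 j i = - Q.1 i j := fun i j => congrFun (congrFun Q.2 i) j
    constructor
    · ext i j; simp [reSk, skewPart, hP i j]; ring
    · ext i j; simp [imSk, skewPart, hQ i j]; ring
  have ec : x * w - w * x
      = (-(adM (reSk w) X - adM (imSk w) Y)).1.map Complex.ofReal
        + Complex.I • (-(adM (reSk w) Y + adM (imSk w) X)).1.map Complex.ofReal := by
    conv_lhs => rw [ew]
    set a := reSk w
    set b := imSk w
    have hm : ∀ P Q : Matrix (Fin n) (Fin n) ℝ,
        (P * Q).map Complex.ofReal = P.map Complex.ofReal * Q.map Complex.ofReal :=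
      fun P Q => Matrix.map_mul (f := Complex.ofRealHom)
    have ha : ∀ P Q : Matrix (Fin n) (Fin n) ℝ,
        (P + Q).map Complex.ofReal = P.map Complex.ofReal + Q.map Complex.ofReal :=
      fun P Q => Matrix.map_add _ Complex.ofReal_add _ _
    have hs : ∀ P Q : Matrix (Fin n) (Fin n) ℝ,
        (P - Q).map Complex.ofReal = P.map Complex.ofReal - Q.map Complex.ofReal :=
      fun P Q => Matrix.map_sub _ Complex.ofReal_sub _ _
    have hn : ∀ P : Matrix (Fin n) (Fin n) ℝ,
        (-P).map Complex.ofReal = -P.map Complex.ofReal := by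
      intro P; ext i j; simp
    simp only [x, adM, LinearMap.coe_mk, AddHom.coe_mk, Submodule.coe_neg, Submodule.coe_sub,
      Submodule.coe_add, hm, ha, hs, hn, Matrix.add_mul, Matrix.mul_add, Matrix.smul_mul,
      Matrix.mul_smul, smul_smul, Complex.I_mul_I, smul_add, smul_sub, smul_neg, neg_smul, one_smul]
    abel
  have e3 : ∀ z, (ipB ∘ₗ R) (-z) (-z) = soInner (R z) z := fun z => by
    rw [map_neg, map_neg, LinearMap.neg_apply, neg_neg]
    rfl
  rw [ec, hermQ, (parts _ _).1, (parts _ _).2, e3, e3] at this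
  exact this

/-! ### Almost minimal vectors -/

lemma hermQ_smul_right (B : soM n →ₗ[ℝ] soM n →ₗ[ℝ] ℝ) (c : ℝ) (v : Matrix (Fin n) (Fin n) ℂ) :
    hermQ B (c • v) = c ^ 2 * hermQ B v := by
  simp only [← hermB_self, map_smul, LinearMap.smul_apply, smul_eq_mul]
  ring

open scoped Matrix.Norms.Operator in
lemma continuous_hermQ (B : soM n →ₗ[ℝ] soM n →ₗ[ℝ] ℝ) : Continuous (hermQ B) := by
  let Bc : Matrix (Fin n) (Fin n) ℂ →L[ℝ] Matrix (Fin n) (Fin n) ℂ →L[ℝ] ℝ :=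
    LinearMap.toContinuousLinearMap
      ((LinearMap.toContinuousLinearMap :
        (Matrix (Fin n) (Fin n) ℂ →ₗ[ℝ] ℝ) ≃ₗ[ℝ] (Matrix (Fin n) (Fin n) ℂ →L[ℝ] ℝ)).toLinearMap
          ∘ₗ hermB B)
  have : hermQ B = fun v => Bc v v := rfl
  rw [this]
  fun_prop

lemma hermQ_ip_skew (v : Matrix (Fin n) (Fin n) ℂ) (hv : vᵀ = -v) :
    hermQ ipB v = 1/2 * ∑ i, ∑ j, ‖v i j‖ ^ 2 := by
  have hvt : ∀ i j, v j i = - v i j := fun i j => congrFun (congrFun hv i) j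
  have h1 : ∀ i j, (reSk v).1 i j = (v i j).re := by
    intro i j; simp [reSk, skewPart, hvt i j]; ring
  have h2 : ∀ i j, (imSk v).1 i j = (v i j).im := by
    intro i j; simp [imSk, skewPart, hvt i j]; ring
  simp only [hermQ, ipB_apply, soInner_self, h1, h2]
  rw [← mul_add, ← Finset.sum_add_distrib]
  simp only [← Finset.sum_add_distrib, Complex.sq_norm, Complex.normSq_apply]
  simp only [pow_two]

/-- The unit sphere of `so(n,ℂ)` is compact. -/
lemma isCompact_skewSphere :
    IsCompact {v : Matrix (Fin n) (Fin n) ℂ | vᵀ = -v ∧ hermQ ipB v = 1} := by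
  have hc : IsCompact (Set.pi Set.univ fun _ : Fin n => Set.pi Set.univ fun _ : Fin n =>
      Metric.closedBall (0 : ℂ) 2) :=
    isCompact_univ_pi fun _ => isCompact_univ_pi fun _ => isCompact_closedBall _ _
  refine IsCompact.of_isClosed_subset (s := (Set.pi Set.univ fun _ : Fin n =>
    Set.pi Set.univ fun _ : Fin n => Metric.closedBall (0 : ℂ) 2 :
      Set (Matrix (Fin n) (Fin n) ℂ))) hc ?_ ?_
  · have hn : Continuous fun v : Matrix (Fin n) (Fin n) ℂ => -v := continuous_neg
    exact IsClosed.inter (isClosed_eq continuous_id.matrix_transpose hn)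
      (isClosed_eq (continuous_hermQ _) continuous_const)
  · rintro v ⟨hv, h1⟩ i - j -
    rw [hermQ_ip_skew v hv] at h1
    have h2 : ‖v i j‖ ^ 2 ≤ ∑ i, ∑ j, ‖v i j‖ ^ 2 :=
      (Finset.single_le_sum (f := fun j => ‖v i j‖ ^ 2) (fun j _ => by positivity)
        (Finset.mem_univ j)).trans
      (Finset.single_le_sum (f := fun i => ∑ j, ‖v i j‖ ^ 2) (fun i _ => by positivity)
        (Finset.mem_univ i))
    rw [mem_closedBall_zero_iff]
    nlinarith [norm_nonneg (v i j)]

/-- Almost minimal vectors almost satisfy `R^#(v, v̄) ≥ 0`. After rescaling to the unit sphere, a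
sequence of counterexamples has a limit which is an exact minimum along its `SO(n,ℂ)`-orbit; the
limit need not lie in `S`, nor be a multiple of an element of `S`. -/
lemma sharp_approx (S : Set (Matrix (Fin n) (Fin n) ℂ)) (hSskew : ∀ v ∈ S, vᵀ = -v)
    (hSinv : ∀ g : Matrix (Fin n) (Fin n) ℂ, gᵀ * g = 1 → g.det = 1 →
      ∀ v ∈ S, g * v * g⁻¹ ∈ S)
    (h : ℝ) (R : soM n →ₗ[ℝ] soM n) (hR : IsSA R)
    (hmem : ∀ v ∈ S, h ≤ hermQ (ipB ∘ₗ R) v) (ε : ℝ) (hε : 0 < ε) :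
    ∃ η > 0, ∀ v ∈ S, hermQ (ipB ∘ₗ R) v ≤ h + η * hermQ ipB v →
      -ε * hermQ ipB v ≤ hermQ (crB R R) v := by
  by_contra! hcon
  have hex : ∀ k : ℕ, ∃ v ∈ S, hermQ (ipB ∘ₗ R) v ≤ h + (1 / ((k : ℝ) + 1)) * hermQ ipB v ∧
      hermQ (crB R R) v < -ε * hermQ ipB v := fun k => hcon _ (by positivity)
  choose v hvS hv1 hv2 using hex
  obtain ⟨d, b, hb⟩ := exists_orthonormal_basis n
  have hpos : ∀ k, 0 < hermQ ipB (v k) := by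
    intro k
    rcases (hermQ_ip_nonneg (v k)).eq_or_lt with h0 | h0
    · have h3 := abs_hermQ_le b hb (crB R R) (v k)
      have h4 := hv2 k
      rw [← h0, mul_zero] at h3 h4
      linarith [neg_abs_le (hermQ (crB R R) (v k))]
    · exact h0
  set c : ℕ → ℝ := fun k => (Real.sqrt (hermQ ipB (v k)))⁻¹ with hc
  have hc2 : ∀ k, c k ^ 2 * hermQ ipB (v k) = 1 := by
    intro k
    rw [hc]
    simp only [inv_pow, Real.sq_sqrt (hpos k).le]
    exact inv_mul_cancel₀ (hpos k).ne'
  have hcpos : ∀ k, 0 < c k ^ 2 := fun k =>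
    pow_pos (inv_pos.2 (Real.sqrt_pos.2 (hpos k))) 2
  have : FirstCountableTopology (Matrix (Fin n) (Fin n) ℂ) :=
    inferInstanceAs (FirstCountableTopology (Fin n → Fin n → ℂ))
  obtain ⟨w, ⟨hw1, -⟩, φ, hφ, hlim⟩ := (isCompact_skewSphere (n := n)).isSeqCompact
    (x := fun k => c k • v k) (fun k => ⟨by
      rw [Matrix.transpose_smul, hSskew _ (hvS k), smul_neg], by
      rw [hermQ_smul_right, hc2]⟩)
  have hinv : Filter.Tendsto (fun k => 1 / ((φ k : ℝ) + 1)) Filter.atTop (nhds 0) :=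
    tendsto_one_div_add_atTop_nhds_zero_nat.comp hφ.tendsto_atTop
  have hmin : ∀ g : Matrix (Fin n) (Fin n) ℂ, gᵀ * g = 1 → g.det = 1 →
      hermQ (ipB ∘ₗ R) w ≤ hermQ (ipB ∘ₗ R) (g * w * g⁻¹) := by
    intro g hg1 hg2
    have hcont : Continuous fun u : Matrix (Fin n) (Fin n) ℂ => hermQ (ipB ∘ₗ R) (g * u * g⁻¹) :=
      (continuous_hermQ _).comp
        ((continuous_const.matrix_mul continuous_id).matrix_mul continuous_const)
    have l1 := ((continuous_hermQ (ipB ∘ₗ R)).tendsto w).comp hlim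
    have l2 := ((hcont.tendsto w).comp hlim).add hinv
    rw [add_zero] at l2
    refine le_of_tendsto_of_tendsto' l1 l2 fun k => ?_
    have a1 := hmem _ (hSinv g hg1 hg2 _ (hvS (φ k)))
    have a2 := hv1 (φ k)
    have e : g * (c (φ k) • v (φ k)) * g⁻¹ = c (φ k) • (g * v (φ k) * g⁻¹) := by
      rw [Matrix.mul_smul, Matrix.smul_mul]
    simp only [Function.comp_apply, e, hermQ_smul_right]
    have a3 : hermQ (ipB ∘ₗ R) (v (φ k)) ≤ hermQ (ipB ∘ₗ R) (g * v (φ k) * g⁻¹)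
        + (1 / ((φ k : ℝ) + 1)) * hermQ ipB (v (φ k)) := by linarith
    have a4 := mul_le_mul_of_nonneg_left a3 (hcpos (φ k)).le
    have a5 : c (φ k) ^ 2 * ((1 / ((φ k : ℝ) + 1)) * hermQ ipB (v (φ k)))
        = 1 / ((φ k : ℝ) + 1) := by
      rw [mul_left_comm, hc2, mul_one]
    rw [mul_add, a5] at a4
    exact a4
  have hge := sharp_nonneg_of_min R hR w hw1 hmin
  have hle : hermQ (crB R R) w ≤ -ε := by
    refine le_of_tendsto' (((continuous_hermQ (crB R R)).tendsto w).comp hlim) fun k => ?_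
    have a4 := mul_le_mul_of_nonneg_left (hv2 (φ k)).le (hcpos (φ k)).le
    rw [mul_left_comm, hc2, mul_one] at a4
    simpa only [Function.comp_apply, hermQ_smul_right] using a4
  linarith

/-! ### The differential inequality -/

/-- The first order expansion of `s ↦ R(s)(v, v̄)` at `t`, with an error that is uniform in `v`
relative to the norm square of `v`. -/
lemma first_order (T : ℝ) (R : ℝ → (soM n →ₗ[ℝ] soM n)) (t : ℝ)
    (hODE : ∀ x y : soM n,
      HasDerivWithinAt (fun s => soInner (R s x) y)
        (soInner (R t (R t x)) y + sharpForm (R t) x y) (Set.Icc (0:ℝ) T) t)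
    (ε : ℝ) (hε : 0 < ε) :
    ∀ᶠ s in nhdsWithin t (Set.Icc 0 T), ∀ v : Matrix (Fin n) (Fin n) ℂ,
      |hermQ (ipB ∘ₗ R s) v - hermQ (ipB ∘ₗ R t) v
        - (s - t) * (hermQ (ipB ∘ₗ (R t ∘ₗ R t)) v + hermQ (crB (R t) (R t)) v)|
      ≤ ε * |s - t| * hermQ ipB v := by
  obtain ⟨d, b, hb⟩ := exists_orthonormal_basis n
  let E : ℝ → (soM n →ₗ[ℝ] soM n →ₗ[ℝ] ℝ) := fun s =>
    ipB ∘ₗ R s + (-1 : ℝ) • (ipB ∘ₗ R t)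
      + (-(s - t)) • (ipB ∘ₗ (R t ∘ₗ R t) + crB (R t) (R t))
  have hE : (fun s => ∑ i, ∑ j, |E s (b i) (b j)|) =o[nhdsWithin t (Set.Icc 0 T)]
      fun s => s - t := by
    refine Asymptotics.IsLittleO.fun_sum fun i _ =>
      Asymptotics.IsLittleO.fun_sum fun j _ => ?_
    have := (hasDerivWithinAt_iff_isLittleO.1 (hODE (b i) (b j))).norm_left
    refine this.congr_left fun s => ?_
    rw [Real.norm_eq_abs]
    congr 1
    simp only [E, LinearMap.add_apply, LinearMap.smul_apply, LinearMap.comp_apply, ipB_apply,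
      crB_self, smul_eq_mul]
    ring
  filter_upwards [hE.def hε] with s hs v
  have h1 := abs_hermQ_le b hb (E s) v
  have h2 : hermQ (E s) v = hermQ (ipB ∘ₗ R s) v - hermQ (ipB ∘ₗ R t) v
        - (s - t) * (hermQ (ipB ∘ₗ (R t ∘ₗ R t)) v + hermQ (crB (R t) (R t)) v) := by
    simp only [E, hermQ_add, hermQ_smul]; ring
  rw [← h2]
  refine h1.trans (mul_le_mul_of_nonneg_right ?_ (hermQ_ip_nonneg v))
  simpa only [Real.norm_eq_abs] using (le_abs_self _).trans hs

/-- The part of `(R + a)^#` linear in `a`, written through the matrix coefficients of `R`; these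
are the functions whose continuity in time is known. -/
lemma crB_cross_eq {d : ℕ} (b : Module.Basis (Fin d) ℝ (soM n))
    (hb : ∀ i j, soInner (b i) (b j) = if i = j then 1 else 0)
    (R : soM n →ₗ[ℝ] soM n) (x y : soM n) :
    (crB R LinearMap.id + crB LinearMap.id R) x y
      = -(1/2) * ∑ k, (- soInner (R (adM y (b k))) (adM x (b k))
          + soInner (R (b k)) (adM y (adM x (b k)))) := by
  rw [LinearMap.add_apply, LinearMap.add_apply, crB_apply, crB_apply, trace_eq_sum b hb,
    trace_eq_sum b hb, ← mul_add, ← Finset.sum_add_distrib]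
  congr 1
  refine Finset.sum_congr rfl fun k _ => ?_
  have e1 : soInner (b k) (adM x (R (adM y (b k)))) = - soInner (R (adM y (b k))) (adM x (b k)) := by
    rw [soInner_comm, soInner_adM]
  have e2 : soInner (b k) (adM x (adM y (R (b k)))) = soInner (R (b k)) (adM y (adM x (b k))) := by
    rw [soInner_comm, soInner_adM, soInner_adM, neg_neg]
  simp only [LinearMap.comp_apply, LinearMap.id_apply, e1, e2]

/-- `(R + a)^#` differs from `R^#` by `O(a)`, uniformly along a continuous curve. -/
lemma sharp_perturb (T : ℝ) (R : ℝ → (soM n →ₗ[ℝ] soM n))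
    (hcont : ∀ x y : soM n, ContinuousOn (fun s => soInner (R s x) y) (Set.Icc (0:ℝ) T)) :
    ∃ K : ℝ, 0 ≤ K ∧ ∀ t ∈ Set.Icc (0:ℝ) T, ∀ a : ℝ, 0 ≤ a → a ≤ 1 →
      ∀ v : Matrix (Fin n) (Fin n) ℂ,
        hermQ (crB (R t + a • LinearMap.id) (R t + a • LinearMap.id)) v - K * a * hermQ ipB v
          ≤ hermQ (crB (R t) (R t)) v := by
  obtain ⟨d, b, hb⟩ := exists_orthonormal_basis n
  have hc : ContinuousOn (fun t => ∑ i, ∑ j,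
      |(crB (R t) LinearMap.id + crB LinearMap.id (R t)) (b i) (b j)|) (Set.Icc (0:ℝ) T) := by
    refine continuousOn_finsetSum _ fun i _ => continuousOn_finsetSum _ fun j _ => ?_
    simp only [crB_cross_eq b hb]
    exact (continuousOn_const.mul (continuousOn_finsetSum _ fun k _ =>
      ((hcont _ _).neg.add (hcont _ _)))).abs
  obtain ⟨K1, hK1⟩ := (isCompact_Icc.image_of_continuousOn hc).bddAbove
  refine ⟨max K1 0 + ∑ i, ∑ j, |crB LinearMap.id LinearMap.id (b i) (b j)|, by positivity, ?_⟩
  intro t ht a ha0 ha1 v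
  set K2 := ∑ i, ∑ j, |crB (n := n) LinearMap.id LinearMap.id (b i) (b j)|
  have hN := hermQ_ip_nonneg v
  have hK2 : 0 ≤ K2 := by positivity
  have h1 := (abs_hermQ_le b hb (crB (R t) LinearMap.id + crB LinearMap.id (R t)) v).trans
    (mul_le_mul_of_nonneg_right ((hK1 ⟨t, ht, rfl⟩).trans (le_max_left K1 0)) hN)
  have h2 := abs_hermQ_le b hb (crB LinearMap.id LinearMap.id) v
  rw [crB_add_smul, hermQ_add, hermQ_add, hermQ_smul, hermQ_smul]
  have h3 := mul_le_mul_of_nonneg_left ((le_abs_self _).trans h1) ha0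
  have h4 := mul_le_mul_of_nonneg_left ((le_abs_self _).trans h2) (mul_nonneg ha0 ha0)
  have h5 : a * a * (K2 * hermQ ipB v) ≤ a * (K2 * hermQ ipB v) :=
    mul_le_mul_of_nonneg_right (by nlinarith) (mul_nonneg hK2 hN)
  linarith

/-- The barrier step: if `R(t) + a` lies in `C(S,h)`, then so does `R(s) + a·exp((K+1)(s - t))`
for all `s > t` close to `t`. -/
lemma barrier_step (S : Set (Matrix (Fin n) (Fin n) ℂ)) (hSskew : ∀ v ∈ S, vᵀ = -v)
    (hSinv : ∀ g : Matrix (Fin n) (Fin n) ℂ, gᵀ * g = 1 → g.det = 1 →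
      ∀ v ∈ S, g * v * g⁻¹ ∈ S)
    (h T : ℝ) (R : ℝ → (soM n →ₗ[ℝ] soM n)) (t : ℝ) (ht : t ∈ Set.Ico (0:ℝ) T) (hR : IsSA (R t))
    (hODE : ∀ x y : soM n,
      HasDerivWithinAt (fun s => soInner (R s x) y)
        (soInner (R t (R t x)) y + sharpForm (R t) x y) (Set.Icc (0:ℝ) T) t)
    (K : ℝ) (hK0 : 0 ≤ K) (a : ℝ) (ha : 0 < a)
    (hK : ∀ v : Matrix (Fin n) (Fin n) ℂ,
        hermQ (crB (R t + a • LinearMap.id) (R t + a • LinearMap.id)) v - K * a * hermQ ipB v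
          ≤ hermQ (crB (R t) (R t)) v)
    (hmem : ∀ v ∈ S, h ≤ hermQ (ipB ∘ₗ R t) v + a * hermQ ipB v) :
    ∀ᶠ s in nhdsWithin t (Set.Ioi t), ∀ v ∈ S,
      h ≤ hermQ (ipB ∘ₗ R s) v + a * Real.exp ((K + 1) * (s - t)) * hermQ ipB v := by
  obtain ⟨d, b, hb⟩ := exists_orthonormal_basis n
  set P := R t + a • LinearMap.id with hP
  have hPSA : IsSA P := by
    intro x y
    have := hR x y
    simp only [hP, LinearMap.add_apply, LinearMap.smul_apply, LinearMap.id_apply, ← ipB_apply,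
      map_add, map_smul] at this ⊢
    rw [this]
  have hPQ : ∀ v, hermQ (ipB ∘ₗ P) v = hermQ (ipB ∘ₗ R t) v + a * hermQ ipB v := by
    intro v
    have : ipB ∘ₗ P = ipB ∘ₗ R t + a • ipB := by
      rw [hP, LinearMap.comp_add, LinearMap.comp_smul, LinearMap.comp_id]
    rw [this, hermQ_add, hermQ_smul]
  obtain ⟨η, hη, happ⟩ := sharp_approx S hSskew hSinv h P hPSA
    (fun v hv => by rw [hPQ]; exact hmem v hv) (a / 4) (by positivity)
  set K2 := ∑ i, ∑ j, |(ipB ∘ₗ (R t ∘ₗ R t) + crB (R t) (R t)) (b i) (b j)| with hK2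
  have hK2n : 0 ≤ K2 := by positivity
  have hfo := first_order T R t hODE (a / 4) (by positivity)
  have hle : nhdsWithin t (Set.Ioi t) ≤ nhdsWithin t (Set.Icc 0 T) := by
    rw [← nhdsWithin_Ioc_eq_nhdsGT ht.2]
    exact nhdsWithin_mono _ fun s hs => ⟨ht.1.trans hs.1.le, hs.2⟩
  have hsmall : ∀ᶠ s in nhdsWithin t (Set.Ioi t), (s - t) * (K2 + a / 4) < η := by
    have : ContinuousAt (fun s : ℝ => (s - t) * (K2 + a / 4)) t := by fun_prop
    exact (this.tendsto.mono_left nhdsWithin_le_nhds).eventually_lt_const (by simpa using hη)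
  filter_upwards [hle hfo, hsmall, self_mem_nhdsWithin] with s hs1 hs2 hs3 v hv
  have hst : 0 < s - t := sub_pos.2 hs3
  have hN := hermQ_ip_nonneg v
  have h1 := (abs_le.1 (hs1 v)).1
  rw [abs_of_pos hst] at h1
  set D := hermQ (ipB ∘ₗ (R t ∘ₗ R t)) v + hermQ (crB (R t) (R t)) v with hD
  have hexp : a * (1 + (K + 1) * (s - t)) * hermQ ipB v
      ≤ a * Real.exp ((K + 1) * (s - t)) * hermQ ipB v := by
    refine mul_le_mul_of_nonneg_right (mul_le_mul_of_nonneg_left ?_ ha.le) hN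
    linarith [Real.add_one_le_exp ((K + 1) * (s - t))]
  refine le_trans ?_ (add_le_add_right hexp _)
  rcases le_or_gt (hermQ (ipB ∘ₗ P) v) (h + η * hermQ ipB v) with hc | hc
    -- `v` is almost minimal, so the barrier function has positive derivative along `v`
  · have h2 := happ v hv hc
    have h3 := hK v
    have h4 : 0 ≤ hermQ (ipB ∘ₗ (R t ∘ₗ R t)) v := by
      have e : ∀ x, (ipB ∘ₗ (R t ∘ₗ R t)) x x = soInner (R t x) (R t x) := fun x => hR _ _
      rw [hermQ, e, e]
      exact add_nonneg (soInner_self_nonneg _) (soInner_self_nonneg _)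
    have h5 : -(a / 4) * hermQ ipB v - K * a * hermQ ipB v ≤ D := by linarith
    have h6 := mul_le_mul_of_nonneg_left h5 hst.le
    have h7 := hmem v hv
    have h8 : 0 ≤ a * (s - t) * hermQ ipB v := by positivity
    linarith
    -- `v` is far from minimal, and `s` is too close to `t` to lose the margin `η`
  · have h2 : |D| ≤ K2 * hermQ ipB v := by
      have := abs_hermQ_le b hb (ipB ∘ₗ (R t ∘ₗ R t) + crB (R t) (R t)) v
      rwa [hermQ_add] at this
    have h3 := mul_le_mul_of_nonneg_left ((neg_abs_le D).trans' (neg_le_neg h2)) hst.le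
    have h4 := mul_le_mul_of_nonneg_right hs2.le hN
    have h5 : 0 ≤ a * (K + 1) * (s - t) * hermQ ipB v := by positivity
    rw [hPQ] at hc
    linarith

open ComplexOrder in
/-- If `S ⊆ so(n,ℂ)` is invariant under the adjoint representation of
`SO(n,ℂ)`, then for every `h ∈ ℝ` the set `C(S,h)` is invariant under the
Ricci flow ODE `R' = R∘R + R^#`. -/
theorem ode_invariance_of_CSet (n : ℕ) (hn : 2 ≤ n)
    (S : Set (Matrix (Fin n) (Fin n) ℂ))
    (hSskew : ∀ v ∈ S, vᵀ = -v)
    (hSinv : ∀ g : Matrix (Fin n) (Fin n) ℂ, gᵀ * g = 1 → g.det = 1 →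
      ∀ v ∈ S, g * v * g⁻¹ ∈ S)
    (h T : ℝ) (hT : 0 < T)
    (R : ℝ → (soM n →ₗ[ℝ] soM n))
    (hSA : ∀ t ∈ Set.Icc (0:ℝ) T, IsSA (R t))
    (hODE : ∀ t ∈ Set.Icc (0:ℝ) T, ∀ x y : soM n,
      HasDerivWithinAt (fun s => soInner (R s x) y)
        (soInner (R t (R t x)) y + sharpForm (R t) x y) (Set.Icc (0:ℝ) T) t)
    (h0 : R 0 ∈ CSet S h) :
    ∀ t ∈ Set.Icc (0:ℝ) T, R t ∈ CSet S h := by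
  have hcont : ∀ x y : soM n,
      ContinuousOn (fun s => soInner (R s x) y) (Set.Icc (0:ℝ) T) :=
    fun x y t ht => (hODE t ht x y).continuousWithinAt
  obtain ⟨K, hK0, hK⟩ := sharp_perturb T R hcont
  have h0' := (mem_CSet_iff S h (R 0) (hSA 0 ⟨le_rfl, hT.le⟩)).1 h0
  -- the barrier of initial size `ε`, normalised so that it stays below `1` on `[0,T]`
  have hbar : ∀ ε : ℝ, 0 < ε → ε * Real.exp ((K + 1) * T) ≤ 1 → ∀ t ∈ Set.Icc (0:ℝ) T, ∀ v ∈ S,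
      h ≤ hermQ (ipB ∘ₗ R t) v + ε * Real.exp ((K + 1) * t) * hermQ ipB v := by
    intro ε hε hε1
    let G : Set ℝ := {t | ∀ v ∈ S,
      h ≤ hermQ (ipB ∘ₗ R t) v + ε * Real.exp ((K + 1) * t) * hermQ ipB v}
    have hG : Set.Icc (0:ℝ) T ⊆ G := by
      apply IsClosed.Icc_subset_of_forall_exists_gt
      · have e : G ∩ Set.Icc (0:ℝ) T = {t | t ∈ Set.Icc (0:ℝ) T ∧ ∀ v ∈ S,
            h ≤ hermQ (ipB ∘ₗ R t) v + ε * Real.exp ((K + 1) * t) * hermQ ipB v} := by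
          ext t; exact and_comm
        have hv : ∀ v, ContinuousOn (fun t => hermQ (ipB ∘ₗ R t) v
            + ε * Real.exp ((K + 1) * t) * hermQ ipB v) (Set.Icc (0:ℝ) T) := fun v =>
          ((hcont _ _).add (hcont _ _)).add (by fun_prop)
        rw [← isSeqClosed_iff_isClosed]
        intro x p hx hp
        have hpI : p ∈ Set.Icc (0:ℝ) T :=
          isClosed_Icc.mem_of_tendsto hp (Filter.Eventually.of_forall fun k => (hx k).2)
        refine ⟨fun v hvS => ?_, hpI⟩
        have hlim := (hv v p hpI).tendsto.comp
          (tendsto_nhdsWithin_iff.2 ⟨hp, Filter.Eventually.of_forall fun k => (hx k).2⟩)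
        exact ge_of_tendsto' hlim fun k => (hx k).1 v hvS
      · intro v hv
        have hN := hermQ_ip_nonneg v
        have : 0 ≤ ε * Real.exp ((K + 1) * 0) * hermQ ipB v := by positivity
        linarith [h0' v hv]
      · rintro t ⟨htG, ht⟩ y hy
        have htI : t ∈ Set.Icc (0:ℝ) T := ⟨ht.1, ht.2.le⟩
        have ha : 0 < ε * Real.exp ((K + 1) * t) := by positivity
        have ha1 : ε * Real.exp ((K + 1) * t) ≤ 1 := by
          refine le_trans (mul_le_mul_of_nonneg_left (Real.exp_le_exp.2 ?_) hε.le) hε1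
          exact mul_le_mul_of_nonneg_left ht.2.le (by linarith)
        have hstep := barrier_step S hSskew hSinv h T R t ht (hSA t htI) (hODE t htI) K hK0 _ ha
          (fun v => hK t htI _ ha.le ha1 v) htG
        obtain ⟨s, hs1, hs2⟩ := (hstep.and (Ioc_mem_nhdsGT hy)).exists
        refine ⟨s, fun v hv => ?_, hs2⟩
        have e : ε * Real.exp ((K + 1) * t) * Real.exp ((K + 1) * (s - t))
            = ε * Real.exp ((K + 1) * s) := by
          rw [mul_assoc, ← Real.exp_add]; ring_nf
        rw [← e]
        exact hs1 v hv
    exact fun t ht => hG ht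
  intro t ht
  rw [mem_CSet_iff S h (R t) (hSA t ht)]
  intro v hv
  have hlim : Filter.Tendsto
      (fun ε : ℝ => hermQ (ipB ∘ₗ R t) v + ε * Real.exp ((K + 1) * t) * hermQ ipB v)
      (nhdsWithin 0 (Set.Ioi 0)) (nhds (hermQ (ipB ∘ₗ R t) v)) := by
    have : ContinuousAt
        (fun ε : ℝ => hermQ (ipB ∘ₗ R t) v + ε * Real.exp ((K + 1) * t) * hermQ ipB v) 0 := by
      fun_prop
    simpa using this.tendsto.mono_left (nhdsWithin_le_nhds (s := Set.Ioi 0))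
  have hsmall : ∀ᶠ ε : ℝ in nhdsWithin 0 (Set.Ioi 0), ε * Real.exp ((K + 1) * T) < 1 := by
    have : ContinuousAt (fun ε : ℝ => ε * Real.exp ((K + 1) * T)) 0 := by fun_prop
    exact (this.tendsto.mono_left nhdsWithin_le_nhds).eventually_lt_const (by simp)
  refine ge_of_tendsto hlim ?_
  filter_upwards [hsmall, self_mem_nhdsWithin] with ε h1 h2
  exact hbar ε h2 h1.le t ht v hv

end
end

section
/- Let V be a finite-dimensional real inner product space and S ⊆ V_ℂ. If a selfadjoint R : V → V lies in the topological interior of C(∂∞S, 0) within the space of selfadjoint endomorphisms of V, then there exists h < 0 with R ∈ C(S,h); that is, the interior of C(∂∞S,0) is contained in ⋃_{h<0} C(S,h), and in particular inf{R(v,v̄) : v ∈ S} > -∞. -/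
/-!
The real quadratic form `f v = R(v, v̄) = ⟨R Re v, Re v⟩ + ⟨R Im v, Im v⟩` is continuous and
satisfies `f (l • v) = l² f v` for real `l`. If `f` is not bounded below on `S`, then, being bounded
below on every ball, it takes negative values at points `vₙ ∈ S` with `‖vₙ‖ > n`. By compactness of
the unit sphere, the vectors `vₙ / ‖vₙ‖` subconverge to some `Y` with `‖Y‖ = 1`, which lies in
`∂∞S` because `1 / ‖vₙ‖ → 0`, and `f Y ≤ 0` by homogeneity and continuity. The form of the
perturbation `R - ε • id` at `Y` is `f Y - ε (|Re Y|² + |Im Y|²) < 0`, so `R` is not interior to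
`C(∂∞S, 0)`.
-/

noncomputable section

variable {m : ℕ}

/-- The inner product on `V = ℝᵐ`. -/
def dotV (x y : Fin m → ℝ) : ℝ := ∑ j, x j * y j

/-- Selfadjointness of an endomorphism of `V` with respect to `⟨·,·⟩`. -/
def IsSAV (R : (Fin m → ℝ) →ₗ[ℝ] (Fin m → ℝ)) : Prop :=
  ∀ a b : Fin m → ℝ, dotV (R a) b = dotV a (R b)

/-- Real part, in the complexification `V_ℂ = ℂᵐ`. -/
def reP (z : Fin m → ℂ) : Fin m → ℝ := fun j => (z j).re

/-- Imaginary part, in the complexification `V_ℂ = ℂᵐ`. -/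
def imP (z : Fin m → ℂ) : Fin m → ℝ := fun j => (z j).im

/-- Conjugation `v ↦ v̄` on `V_ℂ`. -/
def conjP (z : Fin m → ℂ) : Fin m → ℂ := fun j => star (z j)

/-- The unique `ℂ`-bilinear extension to `V_ℂ` of a real bilinear form on `V`. -/
def bilinCV (B : (Fin m → ℝ) → (Fin m → ℝ) → ℝ) (v w : Fin m → ℂ) : ℂ :=
  ((B (reP v) (reP w) - B (imP v) (imP w) : ℝ) : ℂ) +
    ((B (reP v) (imP w) + B (imP v) (reP w) : ℝ) : ℂ) * Complex.I

/-- The value `R(v,w)` of the complexified bilinear form of a (selfadjoint)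
endomorphism `R` of `V`. -/
def qV (R : (Fin m → ℝ) →ₗ[ℝ] (Fin m → ℝ)) (v w : Fin m → ℂ) : ℂ :=
  bilinCV (fun a b => dotV (R a) b) v w

/-- The boundary of `S ⊆ V_ℂ` at infinity: all limits `Y = lim λᵢ·vᵢ` with `λᵢ ∈ ℝ`,
`λᵢ → 0` and `vᵢ ∈ S`. -/
def boundaryAtInfinityV (S : Set (Fin m → ℂ)) : Set (Fin m → ℂ) :=
  {Y | ∃ (l : ℕ → ℝ) (v : ℕ → (Fin m → ℂ)), (∀ i, v i ∈ S) ∧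
      Filter.Tendsto l Filter.atTop (nhds 0) ∧
      Filter.Tendsto (fun i => ((l i : ℝ) : ℂ) • v i) Filter.atTop (nhds Y)}

/-- The real number `R(v, v̄)`, written through the real and imaginary parts of `v`. -/
def realForm (R : (Fin m → ℝ) →ₗ[ℝ] (Fin m → ℝ)) (v : Fin m → ℂ) : ℝ :=
  dotV (R (reP v)) (reP v) + dotV (R (imP v)) (imP v)

lemma dotV_comm (x y : Fin m → ℝ) : dotV x y = dotV y x := by
  simp only [dotV, mul_comm]

lemma dotV_neg_right (x y : Fin m → ℝ) : dotV x (-y) = -dotV x y := by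
  simp [dotV]

lemma qV_conjP (R : (Fin m → ℝ) →ₗ[ℝ] (Fin m → ℝ)) (hsa : IsSAV R) (v : Fin m → ℂ) :
    qV R v (conjP v) = (realForm R v : ℂ) := by
  have h1 : reP (conjP v) = reP v := by ext j; simp [reP, conjP]
  have h2 : imP (conjP v) = -imP v := by ext j; simp [imP, conjP]
  have h3 : dotV (R (imP v)) (reP v) = dotV (R (reP v)) (imP v) := by
    rw [hsa, dotV_comm]
  simp [qV, bilinCV, h1, h2, dotV_neg_right, h3, realForm]

lemma continuous_realForm (R : (Fin m → ℝ) →ₗ[ℝ] (Fin m → ℝ)) : Continuous (realForm R) := by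
  have hR : Continuous R := R.continuous_of_finiteDimensional
  have hre : Continuous (reP : (Fin m → ℂ) → _) := by unfold reP; fun_prop
  have him : Continuous (imP : (Fin m → ℂ) → _) := by unfold imP; fun_prop
  unfold realForm dotV
  fun_prop

lemma realForm_smul (R : (Fin m → ℝ) →ₗ[ℝ] (Fin m → ℝ)) (l : ℝ) (v : Fin m → ℂ) :
    realForm R ((l : ℂ) • v) = l ^ 2 * realForm R v := by
  have h1 : reP ((l : ℂ) • v) = l • reP v := by ext j; simp [reP]
  have h2 : imP ((l : ℂ) • v) = l • imP v := by ext j; simp [imP]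
  simp only [realForm, h1, h2, map_smul, dotV, Pi.smul_apply, smul_eq_mul, mul_add, Finset.mul_sum]
  congr 1 <;> exact Finset.sum_congr rfl fun j _ => by ring

lemma isSAV_sub_smul_id (R : (Fin m → ℝ) →ₗ[ℝ] (Fin m → ℝ)) (hsa : IsSAV R) (ε : ℝ) :
    IsSAV (R - ε • LinearMap.id) := by
  intro a b
  have h := hsa a b
  simp only [dotV] at h
  simp only [dotV, LinearMap.sub_apply, LinearMap.smul_apply, LinearMap.id_apply, Pi.sub_apply,
    Pi.smul_apply, smul_eq_mul, sub_mul, mul_sub, Finset.sum_sub_distrib, h]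
  congr 1
  exact Finset.sum_congr rfl fun j _ => by ring

/-- Strictness uses positive definiteness of the Hermitian form `⟨v, v̄⟩`. -/
lemma realForm_sub_smul_id_lt (R : (Fin m → ℝ) →ₗ[ℝ] (Fin m → ℝ)) {ε : ℝ} (hε : 0 < ε)
    {v : Fin m → ℂ} (hv : v ≠ 0) :
    realForm (R - ε • LinearMap.id) v < realForm R v := by
  have hpos : 0 < ∑ j, Complex.normSq (v j) := by
    obtain ⟨j, hj⟩ := Function.ne_iff.mp hv
    exact Finset.sum_pos' (fun i _ => Complex.normSq_nonneg _)
      ⟨j, Finset.mem_univ j, Complex.normSq_pos.mpr hj⟩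
  have h : realForm (R - ε • LinearMap.id) v
      = realForm R v - ε * ∑ j, Complex.normSq (v j) := by
    simp only [realForm, dotV, LinearMap.sub_apply, LinearMap.smul_apply, LinearMap.id_apply,
      Pi.sub_apply, Pi.smul_apply, smul_eq_mul, Finset.mul_sum, ← Finset.sum_add_distrib,
      ← Finset.sum_sub_distrib]
    refine Finset.sum_congr rfl fun j _ => ?_
    simp only [reP, imP, Complex.normSq_apply]
    ring
  rw [h]
  linarith [mul_pos hε hpos]

/-- A set on which the form is unbounded below has a unit vector in its boundary at infinity at
which the form is nonpositive. -/
lemma exists_boundary_realForm_nonpos (R : (Fin m → ℝ) →ₗ[ℝ] (Fin m → ℝ)) (S : Set (Fin m → ℂ))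
    (hS : ∀ h < (0 : ℝ), ∃ v ∈ S, realForm R v < h) :
    ∃ Y ∈ boundaryAtInfinityV S, ‖Y‖ = 1 ∧ realForm R Y ≤ 0 := by
  have key : ∀ n : ℕ, ∃ v ∈ S, realForm R v < 0 ∧ (n : ℝ) < ‖v‖ := by
    intro n
    obtain ⟨M, hM⟩ := ((isCompact_closedBall (0 : Fin m → ℂ) (n : ℝ)).image
      (continuous_realForm R)).bddBelow
    obtain ⟨v, hv, hlt⟩ := hS (min M (-1)) (min_lt_of_right_lt (by norm_num))
    refine ⟨v, hv, by linarith [min_le_right M (-1)], ?_⟩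
    by_contra! hn
    have := hM ⟨v, by simpa using hn, rfl⟩
    linarith [min_le_left M (-1)]
  choose v hvS hneg hnorm using key
  have hvpos : ∀ n, 0 < ‖v n‖ := fun n => (Nat.cast_nonneg n).trans_lt (hnorm n)
  have hu : ∀ n, (((‖v n‖⁻¹ : ℝ) : ℂ) • v n) ∈ Metric.sphere (0 : Fin m → ℂ) 1 := by
    intro n
    simp [norm_smul, (hvpos n).ne']
  obtain ⟨Y, hY, φ, hφ, hlim⟩ := (isCompact_sphere (0 : Fin m → ℂ) 1).tendsto_subseq hu
  have hinf : Filter.Tendsto (fun n => ‖v n‖) Filter.atTop Filter.atTop :=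
    Filter.tendsto_atTop_mono (fun n => (hnorm n).le) tendsto_natCast_atTop_atTop
  refine ⟨Y, ⟨fun i => ‖v (φ i)‖⁻¹, fun i => v (φ i), fun i => hvS _, ?_, hlim⟩, by simpa using hY, ?_⟩
  · exact tendsto_inv_atTop_zero.comp (hinf.comp hφ.tendsto_atTop)
  · refine le_of_tendsto (((continuous_realForm R).tendsto Y).comp hlim)
      (Filter.Eventually.of_forall fun i => ?_)
    simp only [Function.comp_apply, realForm_smul]
    exact mul_nonpos_of_nonneg_of_nonpos (sq_nonneg _) (hneg _).le

open ComplexOrder in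
/-- If a selfadjoint `R` lies in the interior of `C(∂∞S,0)` within the
space of selfadjoint endomorphisms of `V`, then `R ∈ C(S,h)` for some `h < 0`; in
particular `inf {R(v,v̄) : v ∈ S} > -∞`. -/
theorem interior_CSet_boundary_subset_union_CSet (m : ℕ) (S : Set (Fin m → ℂ))
    (R : (Fin m → ℝ) →ₗ[ℝ] (Fin m → ℝ)) (hsa : IsSAV R)
    (hint : ∃ ε > (0:ℝ), ∀ R' : (Fin m → ℝ) →ₗ[ℝ] (Fin m → ℝ), IsSAV R' →
      (∀ x : Fin m → ℝ, ‖R' x - R x‖ ≤ ε * ‖x‖) →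
      ∀ Y ∈ boundaryAtInfinityV S, (0 : ℂ) ≤ qV R' Y (conjP Y)) :
    ∃ h < (0:ℝ), ∀ v ∈ S, (h : ℂ) ≤ qV R v (conjP v) := by
  obtain ⟨ε, hε, H⟩ := hint
  by_contra! hcon
  obtain ⟨Y, hYS, hY1, hY0⟩ := exists_boundary_realForm_nonpos R S fun h hh => by
    obtain ⟨v, hv, hlt⟩ := hcon h hh
    rw [qV_conjP R hsa, Complex.real_le_real, not_le] at hlt
    exact ⟨v, hv, hlt⟩
  have hYne : Y ≠ 0 := norm_ne_zero_iff.mp (by rw [hY1]; exact one_ne_zero)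
  have hsa' := isSAV_sub_smul_id R hsa ε
  have h := H (R - ε • LinearMap.id) hsa'
    (fun x => by simp [norm_smul, abs_of_pos hε]) Y hYS
  rw [qV_conjP _ hsa', Complex.zero_le_real] at h
  linarith [realForm_sub_smul_id_lt R hε hYne]

end
end

section
/- Let n ≥ 2 and let S := {X ∈ so(n,ℂ) : rank X = 2 and X³ = X} (the skew-symmetric rank-2 matrices whose nonzero eigenvalues are +1 and -1). Then the boundary of S at infinity equals the set of nilpotent matrices in so(n,ℂ) of rank at most 2: ∂∞S = {X ∈ so(n,ℂ) : rank X ≤ 2 and X³ = 0}. -/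
/-!
A skew-symmetric matrix of rank at most `2` is a wedge `a ∧ b = a bᵀ - b aᵀ`, and conversely.
Indeed, for a skew-symmetric `X` the `4 × 4` principal minor on rows and columns `i, j, k, l` is the square of the Pfaffian `X_{ij} X_{kl} - X_{ik} X_{jl} + X_{il} X_{jk}`, so
low rank forces all these Pfaffians to vanish; dividing by a nonzero entry then exhibits `X` as a
wedge (`exists_wedge_of_pfaffian`). As the Pfaffians are polynomials, the condition is closed.
The wedge satisfies `(a ∧ b)³ = D • (a ∧ b)` with `D = (a·b)² - (a·a)(b·b)` (`wedge_cube`).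

If `Y = lim lᵢ vᵢ` with `vᵢ³ = vᵢ`, then `Y³ = lim lᵢ² (lᵢ vᵢ) = 0 • Y = 0`, and the rank bound
survives the limit through the Pfaffians.

Conversely, if `X = a ∧ b` is nilpotent, its plane is degenerate for the bilinear form, so `a` may
be chosen nonzero in the radical: `a·a = a·b = 0` (`exists_isotropic_wedge`). With `w` such that
`a·w = 1`, the matrix `(t⁻¹ a) ∧ (b + t w)` has `D = 1`, hence lies in the given set, and `t` times
it is `a ∧ (b + t w)`, which tends to `X` as `t → 0`.
-/


open Matrix

noncomputable section

variable {n : ℕ}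

/-- The boundary at infinity of a set of complex matrices: all limits `Y = lim λᵢ·vᵢ`
with `λᵢ ∈ ℝ`, `λᵢ → 0` and `vᵢ ∈ S`. -/
def matBoundaryAtInfinity (S : Set (Matrix (Fin n) (Fin n) ℂ)) :
    Set (Matrix (Fin n) (Fin n) ℂ) :=
  {Y | ∃ (l : ℕ → ℝ) (v : ℕ → Matrix (Fin n) (Fin n) ℂ), (∀ i, v i ∈ S) ∧
      Filter.Tendsto l Filter.atTop (nhds 0) ∧
      Filter.Tendsto (fun i => ((l i : ℝ) : ℂ) • v i) Filter.atTop (nhds Y)}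

open Filter Topology

/-- The skew-symmetric matrix `a bᵀ - b aᵀ`, that is, the bivector `a ∧ b`. -/
def wedge (a b : Fin n → ℂ) : Matrix (Fin n) (Fin n) ℂ :=
  vecMulVec a b - vecMulVec b a

lemma wedge_apply (a b : Fin n → ℂ) (i j : Fin n) : wedge a b i j = a i * b j - b i * a j := rfl

lemma wedge_transpose (a b : Fin n → ℂ) : (wedge a b)ᵀ = -wedge a b := by
  ext i j
  simp only [transpose_apply, Matrix.neg_apply, wedge_apply]
  ring

lemma wedge_rank_le (a b : Fin n → ℂ) : (wedge a b).rank ≤ 2 := by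
  -- the factorization `a ∧ b = [a, -b] [b, a]ᵀ` passes through a space of dimension two
  have h : wedge a b = (of ![a, -b])ᵀ * of ![b, a] := by
    ext i j
    simp [wedge_apply, mul_apply, Fin.sum_univ_two]
    ring
  rw [h]
  refine (rank_mul_le_right _ _).trans ?_
  simpa using rank_le_card_height (of ![b, a])

lemma wedge_mulVec (a b x : Fin n → ℂ) :
    wedge a b *ᵥ x = (b ⬝ᵥ x) • a - (a ⬝ᵥ x) • b := by
  simp [wedge, sub_mulVec, vecMulVec_mulVec]

lemma wedge_cube (a b : Fin n → ℂ) :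
    wedge a b ^ 3 = ((a ⬝ᵥ b) ^ 2 - (a ⬝ᵥ a) * (b ⬝ᵥ b)) • wedge a b := by
  refine ext_of_mulVec_single fun i => ?_
  rw [pow_succ, pow_two, ← mulVec_mulVec, ← mulVec_mulVec, smul_mulVec]
  generalize (Pi.single i 1 : Fin n → ℂ) = x
  simp only [wedge_mulVec, dotProduct_sub, dotProduct_smul, dotProduct_comm b a, smul_eq_mul]
  ext j
  simp only [Pi.sub_apply, Pi.smul_apply, smul_eq_mul]
  ring

/-- If the bilinear form is nondegenerate on the span of `a` and `b`, then `a ∧ b` has rank `2`: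
pairing it with `a` and `b` on both sides gives an invertible `2 × 2` matrix. -/
lemma wedge_rank_eq (a b : Fin n → ℂ) (h : (a ⬝ᵥ b) ^ 2 - (a ⬝ᵥ a) * (b ⬝ᵥ b) ≠ 0) :
    (wedge a b).rank = 2 := by
  refine le_antisymm (wedge_rank_le a b) ?_
  set B : Matrix (Fin 2) (Fin n) ℂ := of ![a, b]
  have hM (i j : Fin 2) : (B * (wedge a b * Bᵀ)) i j = B i ⬝ᵥ (wedge a b *ᵥ B j) := rfl
  have hB0 : B 0 = a := rfl
  have hB1 : B 1 = b := rfl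
  have hdet : (B * (wedge a b * Bᵀ)).det ≠ 0 := by
    rw [det_fin_two]
    simp only [hM, hB0, hB1, wedge_mulVec, dotProduct_sub,
      dotProduct_smul, smul_eq_mul, dotProduct_comm b a]
    intro h0
    apply h
    rw [← pow_eq_zero_iff (two_ne_zero)]
    linear_combination h0
  have h2 := rank_of_det_ne_zero hdet
  calc 2 = (B * (wedge a b * Bᵀ)).rank := by simp [h2]
    _ ≤ (wedge a b * Bᵀ).rank := rank_mul_le_right _ _
    _ ≤ (wedge a b).rank := rank_mul_le_left _ _

lemma skew_apply {X : Matrix (Fin n) (Fin n) ℂ} (hX : Xᵀ = -X) (i j : Fin n) :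
    X j i = -X i j := congrFun (congrFun hX i) j

/-- The Pfaffians of a skew-symmetric matrix of rank at most `2` vanish, since the square of a
Pfaffian is a `4 × 4` determinant. -/
lemma pfaffian_eq_zero {X : Matrix (Fin n) (Fin n) ℂ} (hX : Xᵀ = -X) (hr : X.rank ≤ 2)
    (i j k l : Fin n) : X i j * X k l - X i k * X j l + X i l * X j k = 0 := by
  have hdet : (X.submatrix ![i, j, k, l] ![i, j, k, l]).det = 0 := by
    by_contra h
    have h1 := rank_of_det_ne_zero h
    have h2 := rank_submatrix_le X ![i, j, k, l] ![i, j, k, l]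
    simp only [Fintype.card_fin] at h1
    omega
  have hd (i : Fin n) : X i i = 0 := by
    linear_combination (1 / 2 : ℂ) * skew_apply hX i i
  have hsq : (X.submatrix ![i, j, k, l] ![i, j, k, l]).det
      = (X i j * X k l - X i k * X j l + X i l * X j k) ^ 2 := by
    have he : X.submatrix ![i, j, k, l] ![i, j, k, l] =
        !![0, X i j, X i k, X i l; -X i j, 0, X j k, X j l;
          -X i k, -X j k, 0, X k l; -X i l, -X j l, -X k l, 0] := by
      ext p q
      fin_cases p <;> fin_cases q <;> first | exact hd _ | rfl | exact skew_apply hX _ _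
    rw [he]
    simp [det_succ_row_zero, Fin.sum_univ_succ, Fin.succAbove]
    ring
  exact (pow_eq_zero_iff two_ne_zero).mp (hsq.symm.trans hdet)

lemma exists_wedge_of_pfaffian {X : Matrix (Fin n) (Fin n) ℂ}
    (hP : ∀ i j k l, X i j * X k l - X i k * X j l + X i l * X j k = 0) :
    ∃ a b, X = wedge a b := by
  by_cases h0 : X = 0
  · exact ⟨0, 0, by simp [h0, wedge]⟩
  · obtain ⟨i, j, hij⟩ : ∃ i j, X i j ≠ 0 := by
      by_contra! h
      exact h0 (Matrix.ext h)
    -- rows `i` and `j` span the row space, and the relation with pivot `X i j` reads off `X k l`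
    refine ⟨(X i j)⁻¹ • X i, X j, ?_⟩
    ext k l
    simp only [wedge_apply, Pi.smul_apply, smul_eq_mul]
    field_simp
    linear_combination hP i j k l

/-- A nilpotent bivector can be written with a nonzero first factor in the radical of its plane.
The zero matrix is included, which is where `2 ≤ n` is needed. -/
lemma exists_isotropic_wedge (hn : 2 ≤ n) {X : Matrix (Fin n) (Fin n) ℂ} (hX : Xᵀ = -X)
    (hr : X.rank ≤ 2) (h3 : X ^ 3 = 0) :
    ∃ a b : Fin n → ℂ, a ≠ 0 ∧ a ⬝ᵥ a = 0 ∧ a ⬝ᵥ b = 0 ∧ X = wedge a b := by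
  by_cases h0 : X = 0
  · -- `e₀ + i e₁` is a nonzero isotropic vector
    let p : Fin n := ⟨0, by omega⟩
    let q : Fin n := ⟨1, by omega⟩
    have hpq : p ≠ q := by simp [p, q]
    refine ⟨Pi.single p 1 + Pi.single q Complex.I, 0, ?_, ?_, by simp, by simp [h0, wedge]⟩
    · intro h
      have := congrFun h p
      simp [hpq] at this
    · simp [dotProduct_add, hpq, hpq.symm]
  · obtain ⟨p, q, rfl⟩ := exists_wedge_of_pfaffian (pfaffian_eq_zero hX hr)
    have hD : (p ⬝ᵥ q) ^ 2 - (p ⬝ᵥ p) * (q ⬝ᵥ q) = 0 := by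
      rw [wedge_cube] at h3
      exact (smul_eq_zero.mp h3).resolve_right h0
    by_cases hp : p ⬝ᵥ p = 0
    · refine ⟨p, q, ?_, hp, ?_, rfl⟩
      · rintro rfl
        exact h0 (by simp [wedge])
      · simpa [hp] using hD
    · -- project `q` onto the orthogonal complement of `p`
      set c : ℂ := (p ⬝ᵥ q) / (p ⬝ᵥ p) with hc
      have hcp : c * (p ⬝ᵥ p) = p ⬝ᵥ q := by rw [hc]; field_simp
      have hw : wedge p q = wedge (q - c • p) (-p) := by
        ext i j
        simp only [wedge_apply, Pi.sub_apply, Pi.smul_apply, Pi.neg_apply, smul_eq_mul]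
        ring
      refine ⟨q - c • p, -p, ?_, ?_, ?_, hw⟩
      · intro h
        exact h0 (by rw [hw, h]; simp [wedge])
      · simp only [dotProduct_sub, sub_dotProduct, dotProduct_smul, smul_dotProduct, smul_eq_mul,
          dotProduct_comm q p]
        apply mul_left_cancel₀ hp
        linear_combination -hD + (c * (p ⬝ᵥ p) - p ⬝ᵥ q) * hcp
      · simp only [sub_dotProduct, dotProduct_neg, smul_dotProduct, smul_eq_mul,
          dotProduct_comm q p]
        linear_combination hcp

/-- Rank at most `2` passes to limits of skew-symmetric matrices. -/
lemma rank_le_two_of_tendsto {u : ℕ → Matrix (Fin n) (Fin n) ℂ} {Y : Matrix (Fin n) (Fin n) ℂ}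
    (hu : ∀ m, (u m)ᵀ = -u m) (hr : ∀ m, (u m).rank ≤ 2) (h : Tendsto u atTop (𝓝 Y)) :
    Y.rank ≤ 2 := by
  have he (i j : Fin n) : Tendsto (fun m => u m i j) atTop (𝓝 (Y i j)) :=
    (tendsto_pi_nhds.mp (tendsto_pi_nhds.mp h i)) j
  obtain ⟨a, b, rfl⟩ := exists_wedge_of_pfaffian fun i j k l => by
    refine tendsto_nhds_unique ((((he i j).mul (he k l)).sub ((he i k).mul (he j l))).add
      ((he i l).mul (he j k))) ?_
    simp [pfaffian_eq_zero (hu _) (hr _)]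
  exact wedge_rank_le a b

/-- For `S` the set of skew-symmetric rank-2 matrices with `X³ = X`
(nonzero eigenvalues `±1`), the boundary of `S` at infinity is the set of nilpotent
skew-symmetric matrices of rank at most `2`. -/
theorem boundaryAtInfinity_rank_two_pm_one (n : ℕ) (hn : 2 ≤ n) :
    matBoundaryAtInfinity {X : Matrix (Fin n) (Fin n) ℂ | Xᵀ = -X ∧ X.rank = 2 ∧ X ^ 3 = X}
      = {X : Matrix (Fin n) (Fin n) ℂ | Xᵀ = -X ∧ X.rank ≤ 2 ∧ X ^ 3 = 0} := by
  ext Y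
  constructor
  · rintro ⟨l, v, hv, hl, hY⟩
    have hskew (m : ℕ) : (((l m : ℝ) : ℂ) • v m)ᵀ = -(((l m : ℝ) : ℂ) • v m) := by
      rw [transpose_smul, (hv m).1, smul_neg]
    have hrank (m : ℕ) : (((l m : ℝ) : ℂ) • v m).rank ≤ 2 := by
      rw [← (hv m).2.1, ← Matrix.one_mul (v m), ← smul_mul]
      exact rank_mul_le_right _ _ |>.trans (by simp)
    have hYs : Yᵀ = -Y := by
      refine tendsto_nhds_unique ((continuous_id.matrix_transpose.tendsto Y).comp hY) ?_
      simpa [Function.comp_def, (hv _).1] using hY.neg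
    refine ⟨hYs, rank_le_two_of_tendsto hskew hrank hY, ?_⟩
    have hl' : Tendsto (fun m => ((l m : ℝ) : ℂ)) atTop (𝓝 0) := by
      simpa [Function.comp_def] using (Complex.continuous_ofReal.tendsto 0).comp hl
    refine tendsto_nhds_unique (hY.pow 3) ?_
    have h := (hl'.pow 2).smul hY
    rw [zero_pow two_ne_zero, zero_smul] at h
    refine h.congr fun m => ?_
    rw [smul_pow, (hv m).2.2, smul_smul, ← pow_succ]
  · rintro ⟨hX, hr, h3⟩
    obtain ⟨a, b, ha, haa, hab, rfl⟩ := exists_isotropic_wedge hn hX hr h3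
    obtain ⟨p, hp⟩ : ∃ p, a p ≠ 0 := Function.ne_iff.mp ha
    obtain ⟨w, hw⟩ : ∃ w, a ⬝ᵥ w = 1 := ⟨Pi.single p (a p)⁻¹, by simp [hp]⟩
    let t : ℕ → ℝ := fun m => 1 / ((m : ℝ) + 1)
    have ht (m : ℕ) : ((t m : ℝ) : ℂ) ≠ 0 := by
      have : t m ≠ 0 := by positivity
      exact_mod_cast this
    have htl : Tendsto t atTop (𝓝 0) := tendsto_one_div_add_atTop_nhds_zero_nat
    refine ⟨t, fun m => wedge (((t m : ℝ) : ℂ)⁻¹ • a) (b + ((t m : ℝ) : ℂ) • w), ?_, htl, ?_⟩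
    · intro m
      have hD : ((((t m : ℝ) : ℂ)⁻¹ • a) ⬝ᵥ (b + ((t m : ℝ) : ℂ) • w)) ^ 2
          - ((((t m : ℝ) : ℂ)⁻¹ • a) ⬝ᵥ (((t m : ℝ) : ℂ)⁻¹ • a))
            * ((b + ((t m : ℝ) : ℂ) • w) ⬝ᵥ (b + ((t m : ℝ) : ℂ) • w)) = 1 := by
        have h1 : (((t m : ℝ) : ℂ)⁻¹ • a) ⬝ᵥ (b + ((t m : ℝ) : ℂ) • w) = 1 := by
          simp [dotProduct_add, hab, hw, ht m]
        have h2 : (((t m : ℝ) : ℂ)⁻¹ • a) ⬝ᵥ (((t m : ℝ) : ℂ)⁻¹ • a) = 0 := by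
          simp [haa]
        rw [h1, h2]
        ring
      refine ⟨wedge_transpose _ _, wedge_rank_eq _ _ (by rw [hD]; exact one_ne_zero), ?_⟩
      rw [wedge_cube, hD, one_smul]
    · have hlim : Tendsto (fun m => wedge a b + ((t m : ℝ) : ℂ) • wedge a w) atTop
          (𝓝 (wedge a b)) := by
        have hl' : Tendsto (fun m => ((t m : ℝ) : ℂ)) atTop (𝓝 0) := by
          simpa [Function.comp_def] using (Complex.continuous_ofReal.tendsto 0).comp htl
        simpa using (hl'.smul_const (wedge a w)).const_add (wedge a b)
      refine hlim.congr fun m => ?_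
      have := ht m
      ext i j
      simp only [wedge_apply, Matrix.add_apply, Matrix.smul_apply, Pi.add_apply, Pi.smul_apply, smul_eq_mul]
      field_simp
      ring

end
end

section
/- Let n be even, n ≥ 2, and let S := {X ∈ so(n,ℂ) : X² = -I}. Then the boundary of S at infinity is ∂∞S = {X ∈ so(n,ℂ) : X² = 0}. -/
/-!
The inclusion `⊆` holds because `Xᵀ = -X` is a closed linear condition and
`(l i • v i) ^ 2 = -(l i) ^ 2 • 1` tends to `0`.

For `⊇`, let `X` be skew with `X ^ 2 = 0`. It suffices to find skew matrices `Y`, `J` with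
`Y * Y = 0`, `X * Y + Y * X - J * J = 1`, and `J` anticommuting with `X` and `Y`: then
`(X + t • J - t ^ 2 • Y) ^ 2 = -t ^ 2 • 1` for all `t`, so `X` is the limit of `t • v t` with
`v t = t⁻¹ • (X + t • J - t ^ 2 • Y)` in `S`, as `t → 0`.

Such `Y`, `J` come from `H = Xᴴ * X + X * Xᴴ`, which commutes with `X` and is real symmetric.
After conjugation by a real orthogonal matrix, `H` is diagonal. Let `Y` be the Moore–Penrose
inverse of `X`, that is `H⁺ * Xᴴ`; then `X * Y + Y * X` is the projection onto the coordinates where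
`H` does not vanish. The number of those coordinates is even, because the skew matrix `X - Y` is
invertible on them; as `n` is even, so is the number of remaining coordinates, on which `X` and `Y`
vanish and on which a skew `J` with square `-1` can be placed.
-/

open Matrix

noncomputable section

variable {n : ℕ}

open Filter Topology

/-! ### Skew complex structures on coordinate subspaces -/

/-- A coordinate subspace of even dimension carries a skew complex structure `J`. -/
lemma exists_skew_sq_neg_indicator {n : ℕ} (k : ℕ) : ∀ S : Finset (Fin n), S.card = 2 * k →
    ∃ J : Matrix (Fin n) (Fin n) ℂ, Jᵀ = -J ∧
      J * J = -diagonal (fun i => if i ∈ S then (1 : ℂ) else 0) ∧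
      ∀ i ∉ S, ∀ j, J i j = 0 := by
  induction k with
  | zero =>
    intro S hS
    obtain rfl : S = ∅ := by simpa using hS
    exact ⟨0, by simp, by simp, by simp⟩
  | succ k ih =>
    intro S hS
    obtain ⟨a, ha⟩ : S.Nonempty := Finset.card_pos.mp (by omega)
    have h1 : (S.erase a).card = 2 * k + 1 := by rw [Finset.card_erase_of_mem ha]; omega
    obtain ⟨b, hb⟩ : (S.erase a).Nonempty := Finset.card_pos.mp (by omega)
    have h2 : ((S.erase a).erase b).card = 2 * k := by
      rw [Finset.card_erase_of_mem hb]; omega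
    obtain ⟨J, hJt, hJJ, hJ0⟩ := ih _ h2
    have hba : b ≠ a := Finset.ne_of_mem_erase hb
    have hbS : b ∈ S := Finset.mem_of_mem_erase hb
    have hskew : ∀ i j, J i j = -J j i := fun i j => by
      have := congrFun (congrFun hJt j) i
      simpa using this
    have hra : ∀ j, J a j = 0 := hJ0 a (by simp)
    have hrb : ∀ j, J b j = 0 := hJ0 b (by simp)
    have hca : ∀ j, J j a = 0 := fun j => by rw [hskew, hra, neg_zero]
    have hcb : ∀ j, J j b = 0 := fun j => by rw [hskew, hrb, neg_zero]
    -- The rotation by a quarter turn in the plane of the coordinates `a`, `b`.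
    set K : Matrix (Fin n) (Fin n) ℂ := single a b 1 - single b a 1 with hK
    have hJK : J * K = 0 := by
      ext i j
      simp only [Matrix.mul_apply, Matrix.zero_apply, hK]
      refine Finset.sum_eq_zero fun x _ => ?_
      by_cases hxa : x = a
      · simp [hxa, hca]
      by_cases hxb : x = b
      · simp [hxb, hcb]
      simp [single, Ne.symm hxa, Ne.symm hxb]
    have hKt : Kᵀ = -K := by simp [hK]
    have hKJ : K * J = 0 := by
      have := congrArg transpose hJK
      simpa [transpose_mul, hJt, hKt] using this
    have hKK : K * K = -(diagonal fun i => if i = a ∨ i = b then (1 : ℂ) else 0) := by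
      have e1 : K * K = -(single a a 1 + single b b 1) := by
        simp [hK, sub_mul, mul_sub, hba, hba.symm]
        abel
      rw [e1]
      congr 1
      ext i j
      simp only [Matrix.add_apply, single, of_apply, diagonal_apply]
      grind
    refine ⟨J + K, ?_, ?_, ?_⟩
    · rw [transpose_add, hJt, hKt]; abel
    · rw [add_mul, mul_add, mul_add, hJK, hKJ, hJJ, hKK]
      ext i j
      simp only [Matrix.add_apply, Matrix.neg_apply, diagonal_apply, Matrix.zero_apply, Finset.mem_erase]
      grind
    · intro i hi j
      have hia : a ≠ i := fun h => hi (h ▸ ha)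
      have hib : b ≠ i := fun h => hi (h ▸ hbS)
      simp [hK, single, hia, hib, hJ0 i (fun h => hi (Finset.mem_of_mem_erase
        (Finset.mem_of_mem_erase h)))]

/-- If a skew `A` satisfies `A * A = -p` for a coordinate projection `p` with `A * p = A = p * A`,
then `p` has even rank: `M = A + (1 - p)` is invertible and `Mᵀ = M * (1 - 2 * p)`, so
`det (1 - 2 * p) = (-1) ^ rank p` is `1`. -/
lemma even_card_of_skew {n : ℕ} (T : Finset (Fin n)) (A : Matrix (Fin n) (Fin n) ℂ)
    (hA : Aᵀ = -A)
    (hAA : A * A = -diagonal (fun i => if i ∈ T then (1 : ℂ) else 0))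
    (hl : diagonal (fun i => if i ∈ T then (1 : ℂ) else 0) * A = A)
    (hr : A * diagonal (fun i => if i ∈ T then (1 : ℂ) else 0) = A) : Even T.card := by
  set p : Matrix (Fin n) (Fin n) ℂ := diagonal (fun i => if i ∈ T then (1 : ℂ) else 0) with hp
  have hpp : p * p = p := by simp [hp, diagonal_mul_diagonal]
  have hpt : pᵀ = p := by simp [hp]
  have hM4 : (A + (1 - p)) * (A + (1 - p)) * ((A + (1 - p)) * (A + (1 - p))) = 1 := by
    have h2 : (A + (1 - p)) * (A + (1 - p)) = 1 - p - p := by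
      simp only [mul_add, add_mul, mul_sub, sub_mul, mul_one, one_mul, hAA, hl, hr, hpp]
      abel
    rw [h2]
    simp only [mul_sub, sub_mul, mul_one, one_mul, hpp]
    abel
  have hdet : (A + (1 - p)).det ≠ 0 := by
    intro h
    have := congrArg det hM4
    simp [det_mul, h] at this
  have ht : (A + (1 - p))ᵀ = (A + (1 - p)) * (1 - p - p) := by
    rw [transpose_add, transpose_sub, hA, hpt, transpose_one]
    simp only [add_mul, mul_sub, sub_mul, mul_one, one_mul, hr, hpp]
    abel
  have hd : (1 - p - p).det = (-1) ^ T.card := by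
    have : (1 - p - p) = diagonal (fun i => if i ∈ T then (-1 : ℂ) else 1) := by
      ext i j
      simp only [hp, Matrix.sub_apply, Matrix.one_apply, diagonal_apply]
      grind
    rw [this, det_diagonal, Finset.prod_ite]
    simp
  have h := congrArg det ht
  rw [det_transpose, det_mul, hd] at h
  have h1 : ((-1 : ℂ)) ^ T.card = 1 := by
    apply mul_left_cancel₀ hdet
    rw [← h, mul_one]
  rcases Nat.even_or_odd T.card with he | ho
  · exact he
  · rw [ho.neg_one_pow] at h1
    norm_num at h1

/-! ### Deforming a square-zero skew matrix -/

/-- The data needed to deform a square-zero skew `X` to the skew matrices `X + t • J - t ^ 2 • Y`,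
whose squares are `-t ^ 2`. -/
def HasDeformation {n : ℕ} (X : Matrix (Fin n) (Fin n) ℂ) : Prop :=
  ∃ Y J : Matrix (Fin n) (Fin n) ℂ, Yᵀ = -Y ∧ Jᵀ = -J ∧ Y * Y = 0 ∧
    X * Y + Y * X - J * J = 1 ∧ X * J + J * X = 0 ∧ Y * J + J * Y = 0

lemma hasDeformation_of_diagonal {n : ℕ} (heven : Even n) (X : Matrix (Fin n) (Fin n) ℂ)
    (hX : Xᵀ = -X) (hXX : X * X = 0) (d : Fin n → ℝ)
    (hd : Xᴴ * X + X * Xᴴ = diagonal (fun i => (d i : ℂ))) : HasDeformation X := by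
  have hskew : ∀ i j, X i j = -X j i := fun i j => by
    have := congrFun (congrFun hX j) i
    simpa using this
  have hXh : Xᴴᵀ = -Xᴴ := by
    rw [show Xᴴᵀ = Xᵀᴴ from rfl, hX, conjTranspose_neg]
  have hcomm : diagonal (fun i => (d i : ℂ)) * X = X * diagonal (fun i => (d i : ℂ)) := by
    rw [← hd, add_mul, mul_add, mul_assoc Xᴴ, hXX, ← mul_assoc X X, hXX]
    simp [mul_assoc]
  have hent : ∀ i j, X i j ≠ 0 → d i = d j := by
    intro i j hij
    have := congrFun (congrFun hcomm i) j
    rw [diagonal_mul, mul_diagonal, mul_comm] at this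
    exact_mod_cast mul_left_cancel₀ hij this
  have hrow : ∀ i, d i = 0 → ∀ j, X i j = 0 := by
    intro i hi j
    have h := congrFun (congrFun hd i) i
    rw [diagonal_apply_eq, hi, Matrix.add_apply, Matrix.mul_apply, Matrix.mul_apply] at h
    have h1 : ∑ k, Xᴴ i k * X k i = ((∑ k, Complex.normSq (X k i) : ℝ) : ℂ) := by
      push_cast
      refine Finset.sum_congr rfl fun k _ => ?_
      rw [conjTranspose_apply, Complex.star_def, Complex.normSq_eq_conj_mul_self]
    have h2 : ∑ k, X i k * Xᴴ k i = ((∑ k, Complex.normSq (X i k) : ℝ) : ℂ) := by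
      push_cast
      refine Finset.sum_congr rfl fun k _ => ?_
      rw [conjTranspose_apply, Complex.star_def, Complex.normSq_eq_conj_mul_self, mul_comm]
    rw [h1, h2] at h
    have h3 : (∑ k, Complex.normSq (X k i)) + ∑ k, Complex.normSq (X i k) = 0 := by
      exact_mod_cast h
    have h4 : 0 ≤ ∑ k, Complex.normSq (X k i) :=
      Finset.sum_nonneg fun k _ => Complex.normSq_nonneg _
    have h5 : Complex.normSq (X i j) ≤ ∑ k, Complex.normSq (X i k) :=
      Finset.single_le_sum (f := fun k => Complex.normSq (X i k))
        (fun k _ => Complex.normSq_nonneg _) (Finset.mem_univ j)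
    exact Complex.normSq_eq_zero.mp (le_antisymm (by linarith) (Complex.normSq_nonneg _))
  -- As `0⁻¹ = 0`, this diagonal matrix is the Moore–Penrose inverse of `Xᴴ * X + X * Xᴴ`.
  set E : Matrix (Fin n) (Fin n) ℂ := diagonal (fun i => ((d i : ℂ))⁻¹) with hE
  have hEX : E * X = X * E := by
    ext i j
    rw [hE, diagonal_mul, mul_diagonal]
    by_cases h : X i j = 0
    · simp [h]
    · rw [hent i j h, mul_comm]
  have hEh : Eᴴ = E := by
    rw [hE, diagonal_conjTranspose]
    congr 1
    ext i
    simp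
  have hEXh : E * Xᴴ = Xᴴ * E := by
    have := congrArg conjTranspose hEX
    rw [conjTranspose_mul, conjTranspose_mul, hEh] at this
    exact this.symm
  have hEt : Eᵀ = E := by simp [hE]
  have hXhXh : Xᴴ * Xᴴ = 0 := by rw [← conjTranspose_mul, hXX, conjTranspose_zero]
  obtain ⟨Y, hY⟩ : ∃ Y, Y = E * Xᴴ := ⟨_, rfl⟩
  have hYt : Yᵀ = -Y := by rw [hY, transpose_mul, hXh, hEt, neg_mul, hEXh]
  have hYY : Y * Y = 0 := by
    rw [hY, mul_assoc, ← mul_assoc Xᴴ, ← hEXh, mul_assoc E Xᴴ, hXhXh]; simp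
  set T : Finset (Fin n) := Finset.univ.filter (fun i => d i ≠ 0) with hT
  have hP : X * Y + Y * X = diagonal (fun i => if i ∈ T then (1 : ℂ) else 0) := by
    rw [hY, ← mul_assoc, ← hEX, mul_assoc, mul_assoc, ← mul_add, add_comm (X * Xᴴ), hd, hE,
      diagonal_mul_diagonal]
    congr 1
    ext i
    by_cases h : d i = 0 <;> simp [hT, h]
  have hcol : ∀ i, d i = 0 → ∀ j, X j i = 0 := fun i hi j => by
    rw [hskew, hrow i hi, neg_zero]
  have hYrow : ∀ i, d i = 0 → ∀ j, Y i j = 0 := fun i hi j => by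
    rw [hY, hE, diagonal_mul, conjTranspose_apply, hcol i hi]; simp
  have hYcol : ∀ i, d i = 0 → ∀ j, Y j i = 0 := fun i hi j => by
    rw [hY, hE, diagonal_mul, conjTranspose_apply, hrow i hi]; simp
  have hTe : Even T.card := by
    refine even_card_of_skew T (X - Y) ?_ ?_ ?_ ?_
    · rw [transpose_sub, hX, hYt]; abel
    · rw [← hP, sub_mul, mul_sub, mul_sub, hXX, hYY]; abel
    · ext i j
      rw [diagonal_mul]
      by_cases h : d i = 0
      · simp [hrow i h, hYrow i h]
      · simp [hT, h]
    · ext i j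
      rw [mul_diagonal]
      by_cases h : d j = 0
      · simp [hcol j h, hYcol j h]
      · simp [hT, h]
  have hSe : Even (Tᶜ).card := by
    rw [Finset.card_compl, Fintype.card_fin]
    exact (Nat.even_sub (by simpa using T.card_le_univ)).mpr (iff_of_true heven hTe)
  obtain ⟨k, hk⟩ := hSe
  obtain ⟨J, hJt, hJJ, hJ0⟩ := exists_skew_sq_neg_indicator k Tᶜ (by omega)
  have hJ0' : ∀ i, d i ≠ 0 → ∀ j, J i j = 0 := fun i hi => hJ0 i (by simp [hT, hi])
  have hXJ : X * J = 0 := by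
    ext i j
    rw [Matrix.mul_apply]
    refine Finset.sum_eq_zero fun x _ => ?_
    by_cases h : d x = 0
    · rw [hcol x h, zero_mul]
    · rw [hJ0' x h, mul_zero]
  have hYJ : Y * J = 0 := by
    ext i j
    rw [Matrix.mul_apply]
    refine Finset.sum_eq_zero fun x _ => ?_
    by_cases h : d x = 0
    · rw [hYcol x h, zero_mul]
    · rw [hJ0' x h, mul_zero]
  have hJX : J * X = 0 := by
    have := congrArg transpose hXJ
    simpa [transpose_mul, hJt, hX] using this
  have hJY : J * Y = 0 := by
    have := congrArg transpose hYJ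
    simpa [transpose_mul, hJt, hYt] using this
  refine ⟨Y, J, hYt, hJt, hYY, ?_, by rw [hXJ, hJX, add_zero], by rw [hYJ, hJY, add_zero]⟩
  rw [hP, hJJ]
  ext i j
  simp only [Matrix.sub_apply, Matrix.neg_apply, diagonal_apply, Matrix.one_apply, Finset.mem_compl]
  grind

/-- The diagonal case is the general one, up to conjugation by a real orthogonal matrix
diagonalising the real symmetric matrix `Xᴴ * X + X * Xᴴ`. -/
lemma hasDeformation {n : ℕ} (heven : Even n) (X : Matrix (Fin n) (Fin n) ℂ)
    (hX : Xᵀ = -X) (hXX : X * X = 0) : HasDeformation X := by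
  have hXh : Xᴴᵀ = -Xᴴ := by
    rw [show Xᴴᵀ = Xᵀᴴ from rfl, hX, conjTranspose_neg]
  set H := Xᴴ * X + X * Xᴴ with hH
  have hHt : Hᵀ = H := by
    rw [hH, transpose_add, transpose_mul, transpose_mul, hX, hXh]
    simp [add_comm]
  have hHh : Hᴴ = H := by
    rw [hH, conjTranspose_add, conjTranspose_mul, conjTranspose_mul, conjTranspose_conjTranspose]
  have hreal : ∀ i j, ((H i j).re : ℂ) = H i j := fun i j => by
    have h1 := congrFun (congrFun hHh j) i
    have h2 := congrFun (congrFun hHt j) i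
    rw [transpose_apply] at h2
    rw [conjTranspose_apply, ← h2] at h1
    exact Complex.conj_eq_iff_re.mp h1
  set R : Matrix (Fin n) (Fin n) ℝ := H.map Complex.re with hR
  have hRH : R.map ((↑) : ℝ → ℂ) = H := by
    ext i j
    exact hreal i j
  have hRherm : R.IsHermitian := by
    ext i j
    have := congrFun (congrFun hHt i) j
    rw [transpose_apply] at this
    simp [hR, this]
  obtain ⟨U, d, hU1, hU2, hRd⟩ : ∃ (U : Matrix (Fin n) (Fin n) ℝ) (d : Fin n → ℝ),
      U * Uᵀ = 1 ∧ Uᵀ * U = 1 ∧ R = U * diagonal d * Uᵀ := by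
    have hs : star (hRherm.eigenvectorUnitary : Matrix (Fin n) (Fin n) ℝ)
        = (hRherm.eigenvectorUnitary : Matrix (Fin n) (Fin n) ℝ)ᵀ := by
      ext i j; simp [star_apply]
    refine ⟨hRherm.eigenvectorUnitary, hRherm.eigenvalues, ?_, ?_, ?_⟩
    · rw [← hs]; exact Unitary.mul_star_self_of_mem hRherm.eigenvectorUnitary.2
    · rw [← hs]; exact Unitary.star_mul_self_of_mem hRherm.eigenvectorUnitary.2
    · have := hRherm.spectral_theorem
      rw [Unitary.conjStarAlgAut_apply, hs] at this
      exact this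
  set V : Matrix (Fin n) (Fin n) ℂ := U.map Complex.ofRealHom with hV
  have hVt : Vᵀ = Uᵀ.map Complex.ofRealHom := rfl
  have hV1 : V * Vᵀ = 1 := by
    rw [hVt, hV, ← Matrix.map_mul, hU1]; simp
  have hV2 : Vᵀ * V = 1 := by
    rw [hVt, hV, ← Matrix.map_mul, hU2]; simp
  have hVh : Vᴴ = Vᵀ := by
    ext i j; simp [hV]
  have hHd : H = V * diagonal (fun i => (d i : ℂ)) * Vᵀ := by
    rw [← hRH, hRd]
    change (U * diagonal d * Uᵀ).map Complex.ofRealHom = _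
    rw [Matrix.map_mul, Matrix.map_mul, hVt]
    congr 2
    ext i j
    by_cases h : i = j <;> simp [h]
  -- Since `V * Vᵀ = Vᵀ * V = 1`, conjugation by `V` and by `Vᵀ` is multiplicative.
  have c : ∀ A B : Matrix (Fin n) (Fin n) ℂ, (Vᵀ * A * V) * (Vᵀ * B * V) = Vᵀ * (A * B) * V := by
    intro A B
    calc _ = Vᵀ * A * (V * Vᵀ) * B * V := by simp only [mul_assoc]
      _ = _ := by rw [hV1]; simp only [mul_assoc, one_mul]
  have c' : ∀ A B : Matrix (Fin n) (Fin n) ℂ, (V * A * Vᵀ) * (V * B * Vᵀ) = V * (A * B) * Vᵀ := by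
    intro A B
    calc _ = V * A * (Vᵀ * V) * B * Vᵀ := by simp only [mul_assoc]
      _ = _ := by rw [hV2]; simp only [mul_assoc, one_mul]
  have hXc : X = V * (Vᵀ * X * V) * Vᵀ := by
    calc X = (V * Vᵀ) * X * (V * Vᵀ) := by rw [hV1]; simp
      _ = _ := by simp only [mul_assoc]
  have hVhh : Vᵀᴴ = V := by rw [← hVh, conjTranspose_conjTranspose]
  have hXch : (Vᵀ * X * V)ᴴ = Vᵀ * Xᴴ * V := by
    rw [conjTranspose_mul, conjTranspose_mul, hVh, hVhh, mul_assoc]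
  obtain ⟨Y, J, hY, hJ, hYY, h1, h2, h3⟩ := hasDeformation_of_diagonal heven (Vᵀ * X * V)
    (by rw [transpose_mul, transpose_mul, transpose_transpose, hX]; simp [mul_assoc])
    (by rw [c, hXX]; simp) d (by
      rw [hXch, c, c, ← add_mul, ← mul_add, ← hH, hHd]
      calc _ = (Vᵀ * V) * diagonal (fun i => (d i : ℂ)) * (Vᵀ * V) := by simp only [mul_assoc]
        _ = _ := by rw [hV2]; simp)
  refine ⟨V * Y * Vᵀ, V * J * Vᵀ, ?_, ?_, ?_, ?_, ?_, ?_⟩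
  · rw [transpose_mul, transpose_mul, transpose_transpose, hY]; simp [mul_assoc]
  · rw [transpose_mul, transpose_mul, transpose_transpose, hJ]; simp [mul_assoc]
  · rw [c', hYY]; simp
  · rw [hXc, c', c', c', ← add_mul, ← mul_add, ← sub_mul, ← mul_sub, h1, mul_one, hV1]
  · rw [hXc, c', c', ← add_mul, ← mul_add, h2]; simp
  · rw [c', c', ← add_mul, ← mul_add, h3]; simp

/-! ### The boundary at infinity -/

/-- For `n` even and `S = {X ∈ so(n,ℂ) : X² = -I}`, the boundary of `S`
at infinity is `{X ∈ so(n,ℂ) : X² = 0}`. -/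
theorem boundaryAtInfinity_sq_eq_neg_one (n : ℕ) (hn : 2 ≤ n) (heven : Even n) :
    matBoundaryAtInfinity {X : Matrix (Fin n) (Fin n) ℂ | Xᵀ = -X ∧ X ^ 2 = -1}
      = {X : Matrix (Fin n) (Fin n) ℂ | Xᵀ = -X ∧ X ^ 2 = 0} := by
  ext X
  constructor
  · rintro ⟨l, v, hv, hl, hlim⟩
    have hlc : Tendsto (fun i => ((l i : ℝ) : ℂ)) atTop (𝓝 0) := by
      have := (Complex.continuous_ofReal.tendsto 0).comp hl
      simpa [Function.comp_def] using this
    constructor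
    · have h1 := ((continuous_id.matrix_transpose).tendsto X).comp hlim
      refine tendsto_nhds_unique h1 (hlim.neg.congr fun i => ?_)
      simp [(hv i).1]
    · have h1 := hlim.pow 2
      have h2 : Tendsto (fun i => (((l i : ℝ) : ℂ)) ^ 2 • (-1 : Matrix (Fin n) (Fin n) ℂ))
          atTop (𝓝 ((0 : ℂ) ^ 2 • (-1))) := (hlc.pow 2).smul_const _
      have h3 : (0 : ℂ) ^ 2 • (-1 : Matrix (Fin n) (Fin n) ℂ) = 0 := by simp
      rw [h3] at h2
      refine tendsto_nhds_unique h1 (h2.congr fun i => ?_)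
      rw [smul_pow, (hv i).2]
  · rintro ⟨hX, hXX⟩
    obtain ⟨Y, J, hY, hJ, hYY, h1, h2, h3⟩ := hasDeformation heven X hX (by rwa [← sq])
    have ht : Tendsto (fun i : ℕ => (1 : ℝ) / ((i : ℝ) + 1)) atTop (𝓝 0) :=
      tendsto_one_div_add_atTop_nhds_zero_nat
    set t : ℕ → ℝ := fun i => 1 / ((i : ℝ) + 1) with htdef
    have ht0 : ∀ i, ((t i : ℝ) : ℂ) ≠ 0 := fun i => by
      have : (0 : ℝ) < t i := by simp only [htdef]; positivity
      exact_mod_cast this.ne'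
    have hsq : ∀ s : ℂ, (X + s • J - s ^ 2 • Y) ^ 2 = s ^ 2 • (-1) := by
      intro s
      have e : (X + s • J - s ^ 2 • Y) ^ 2 = X ^ 2 + s • (X * J + J * X)
          - s ^ 2 • (X * Y + Y * X - J * J) - s ^ 3 • (Y * J + J * Y) + s ^ 4 • (Y * Y) := by
        rw [sq (X + s • J - s ^ 2 • Y), sq X]
        simp only [mul_add, add_mul, mul_sub, sub_mul, smul_mul_assoc, mul_smul_comm]
        module
      rw [e, h1, h2, h3, hYY, hXX]
      simp
    refine ⟨t, fun i => ((t i : ℝ) : ℂ)⁻¹ • (X + ((t i : ℝ) : ℂ) • J - ((t i : ℝ) : ℂ) ^ 2 • Y),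
      fun i => ⟨?_, ?_⟩, ht, ?_⟩
    · simp only [transpose_smul, transpose_sub, transpose_add, hX, hY, hJ]
      module
    · rw [smul_pow, hsq, smul_smul, ← mul_pow, inv_mul_cancel₀ (ht0 i)]
      simp
    · have hc : Continuous fun s : ℝ => X + (s : ℂ) • J - (s : ℂ) ^ 2 • Y := by
        fun_prop
      have := (hc.tendsto 0).comp ht
      simp only [Complex.ofReal_zero, zero_smul, add_zero, ne_eq, OfNat.ofNat_ne_zero,
        not_false_eq_true, zero_pow, sub_zero] at this
      refine this.congr fun i => ?_
      rw [smul_smul, mul_inv_cancel₀ (ht0 i), one_smul]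
      rfl

end
end

section
/- Let n ≥ 1 and let S := {X ∈ gl(n,ℂ) : rank X = 1 and tr X = 1}. Then the boundary of S at infinity equals the set of nilpotent matrices of rank at most 1: ∂∞S = {X ∈ gl(n,ℂ) : rank X ≤ 1 and X² = 0}. -/
/-!
A matrix has rank at most one exactly when all its `2 × 2` minors vanish
(`minor_eq_zero_of_rank_le_one`; the converse is the explicit factorisation into a column and a row
in `exists_vecMulVec_of_minors`). This is a closed condition which is stable under scaling, so it
passes from the matrices `lᵢ • vᵢ` to their limit `Y`. Moreover `tr (lᵢ • vᵢ) = lᵢ → 0`, so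
`tr Y = 0`, and vanishing of the minors gives `Y² = (tr Y) • Y = 0`.

Conversely, a square-zero matrix of rank at most one is `u wᵀ` with `u ≠ 0` and `u ⬝ w = 0`. Choose
`z` with `u ⬝ z = 1`. Then `u (t⁻¹ w + z)ᵀ` has rank one and trace one for every real `t ≠ 0`, and
multiplied by `t` it equals `u wᵀ + t • u zᵀ`, which tends to `u wᵀ` as `t → 0`.
-/

open Matrix

noncomputable section

variable {n : ℕ}

theorem minor_eq_zero_of_rank_le_one {n : ℕ} {X : Matrix (Fin n) (Fin n) ℂ} (h : X.rank ≤ 1)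
    (i j k l : Fin n) : X i j * X k l = X i l * X k j := by
  obtain ⟨v, hv⟩ := finrank_le_one_iff.mp h
  have hcol : ∀ j, ∃ c : ℂ, ∀ i, X i j = c * (v : Fin n → ℂ) i := by
    intro j
    obtain ⟨c, hc⟩ := hv ⟨X.mulVecLin (Pi.single j 1), LinearMap.mem_range_self _ _⟩
    refine ⟨c, fun i => ?_⟩
    have h2 := congrFun (congrArg Subtype.val hc) i
    simpa using h2.symm
  obtain ⟨c, hc⟩ := hcol j
  obtain ⟨d, hd⟩ := hcol l
  rw [hc, hc, hd, hd]
  ring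

theorem sq_eq_trace_smul_of_minors {n : ℕ} {Y : Matrix (Fin n) (Fin n) ℂ}
    (h : ∀ i j k l, Y i j * Y k l = Y i l * Y k j) : Y ^ 2 = Y.trace • Y := by
  ext i j
  rw [pow_two, Matrix.mul_apply, Matrix.smul_apply, Matrix.trace, smul_eq_mul, Finset.sum_mul]
  refine Finset.sum_congr rfl fun k _ => ?_
  rw [h i k k j, Matrix.diag_apply, mul_comm]

/-- The factor `u` can be taken nonzero even for `Y = 0`, because `n ≥ 1`. -/
theorem exists_vecMulVec_of_minors {n : ℕ} (hn : 1 ≤ n) {Y : Matrix (Fin n) (Fin n) ℂ}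
    (h : ∀ i j k l, Y i j * Y k l = Y i l * Y k j) :
    ∃ u w : Fin n → ℂ, u ≠ 0 ∧ Y = vecMulVec u w := by
  by_cases hY : Y = 0
  · refine ⟨Pi.single ⟨0, hn⟩ 1, 0, by simp, by simp [hY]⟩
  · obtain ⟨a, b, hab⟩ : ∃ a b, Y a b ≠ 0 := by
      by_contra! hc
      exact hY (Matrix.ext hc)
    refine ⟨fun i => Y i b, fun j => (Y a b)⁻¹ * Y a j, fun h0 => hab (congrFun h0 a), ?_⟩
    ext i j
    rw [vecMulVec_apply]
    field_simp
    rw [h i j a b]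

theorem rank_vecMulVec_eq_one_of_dotProduct {n : ℕ} {u w : Fin n → ℂ} (h : u ⬝ᵥ w = 1) :
    (vecMulVec u w).rank = 1 := by
  refine le_antisymm (rank_vecMulVec_le u w) (Nat.one_le_iff_ne_zero.mpr fun h0 => ?_)
  have hz : (vecMulVec u w).mulVecLin = 0 :=
    LinearMap.range_eq_bot.mp (Submodule.finrank_eq_zero.mp h0)
  -- The vector `u` is fixed by `u wᵀ`, so it would have to vanish.
  have hu : u = 0 := by
    have h1 := LinearMap.congr_fun hz u
    rw [mulVecLin_apply, vecMulVec_mulVec, dotProduct_comm w u, h] at h1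
    simpa using h1
  simp [hu] at h

/-- For `S = {X ∈ gl(n,ℂ) : rank X = 1, tr X = 1}`, the boundary of `S`
at infinity is the set of nilpotent matrices of rank at most one,
`{X : rank X ≤ 1, X² = 0}`. -/
theorem boundaryAtInfinity_rank_one_trace_one (n : ℕ) (hn : 1 ≤ n) :
    matBoundaryAtInfinity {X : Matrix (Fin n) (Fin n) ℂ | X.rank = 1 ∧ X.trace = 1}
      = {X : Matrix (Fin n) (Fin n) ℂ | X.rank ≤ 1 ∧ X ^ 2 = 0} := by
  ext Y
  constructor
  · rintro ⟨l, v, hv, hl, hY⟩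
    have hent : ∀ i j, Filter.Tendsto (fun m => ((l m : ℝ) : ℂ) * v m i j) Filter.atTop
        (nhds (Y i j)) := fun i j => ((continuous_id.matrix_elem i j).tendsto Y).comp hY
    have hmin : ∀ i j k m, Y i j * Y k m = Y i m * Y k j := by
      intro i j k m
      refine tendsto_nhds_unique ((hent i j).mul (hent k m)) ?_
      refine ((hent i m).mul (hent k j)).congr fun p => ?_
      linear_combination (-(l p : ℂ) ^ 2) * minor_eq_zero_of_rank_le_one (hv p).1.le i j k m
    have htr : Y.trace = 0 := by
      have h1 : Filter.Tendsto (fun m => (((l m : ℝ) : ℂ) • v m).trace) Filter.atTop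
          (nhds Y.trace) := ((continuous_id.matrix_trace).tendsto Y).comp hY
      refine tendsto_nhds_unique h1 ?_
      have h2 : Filter.Tendsto (fun m => ((l m : ℝ) : ℂ)) Filter.atTop (nhds 0) := by
        simpa [Function.comp_def] using (Complex.continuous_ofReal.tendsto 0).comp hl
      refine h2.congr fun m => ?_
      rw [trace_smul, (hv m).2, smul_eq_mul, mul_one]
    refine ⟨?_, by rw [sq_eq_trace_smul_of_minors hmin, htr, zero_smul]⟩
    obtain ⟨u, w, -, rfl⟩ := exists_vecMulVec_of_minors hn hmin
    exact rank_vecMulVec_le u w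
  · rintro ⟨hr, hsq⟩
    have hmin := minor_eq_zero_of_rank_le_one hr
    have htr : Y.trace = 0 := by
      rw [sq_eq_trace_smul_of_minors hmin, smul_eq_zero] at hsq
      rcases hsq with h | h
      · exact h
      · rw [h, trace_zero]
    obtain ⟨u, w, hu, rfl⟩ := exists_vecMulVec_of_minors hn hmin
    rw [trace_vecMulVec] at htr
    obtain ⟨a, ha⟩ := Function.ne_iff.mp hu
    obtain ⟨z, hz⟩ : ∃ z : Fin n → ℂ, u ⬝ᵥ z = 1 :=
      ⟨Pi.single a (u a)⁻¹, by rw [dotProduct_single]; exact mul_inv_cancel₀ ha⟩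
    have hdot : ∀ c : ℂ, u ⬝ᵥ (c • w + z) = 1 := fun c => by
      rw [dotProduct_add, dotProduct_smul, htr, hz, smul_zero, zero_add]
    have hl : Filter.Tendsto (fun m : ℕ => 1 / ((m : ℝ) + 1)) Filter.atTop (nhds 0) :=
      tendsto_one_div_add_atTop_nhds_zero_nat
    refine ⟨fun m => 1 / ((m : ℝ) + 1), fun m => vecMulVec u (((m : ℂ) + 1) • w + z),
      fun m => ⟨rank_vecMulVec_eq_one_of_dotProduct (hdot _), ?_⟩, hl, ?_⟩
    · rw [trace_vecMulVec, hdot]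
    · have h2 : Filter.Tendsto (fun m : ℕ => ((1 / ((m : ℝ) + 1) : ℝ) : ℂ)) Filter.atTop
          (nhds 0) := by
        simpa [Function.comp_def] using (Complex.continuous_ofReal.tendsto 0).comp hl
      have h3 := (h2.smul_const (vecMulVec u z)).const_add (vecMulVec u w)
      rw [zero_smul, add_zero] at h3
      refine h3.congr fun m => ?_
      have hm : (m : ℂ) + 1 ≠ 0 := Nat.cast_add_one_ne_zero m
      ext i j
      simp only [Matrix.add_apply, Matrix.smul_apply, vecMulVec_apply, Pi.add_apply,
        Pi.smul_apply, smul_eq_mul]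
      push_cast
      field_simp

end
end
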